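/- Let p and q be primes satisfying conditions (1). Then the 2-class group of the triquadratic field F_pq = Q(√(2p), √(2q), √(-2)) is isomorphic to Z/2Z × Z/2Z. -/

import Mathlib

noncomputable section

open IntermediateField NumberField

/-- Conditions (1). -/
def Cond1 (p q : ℕ) : Prop :=
  p.Prime ∧ q.Prime ∧ p % 4 = 1 ∧ q % 4 = 3 ∧
    jacobiSym 2 p = -1 ∧ jacobiSym 2 q = 1 ∧ jacobiSym (p : ℤ) q = -1

/-- The triquadratic field `F_pq = ℚ(√(2p), √(2q), √(-2))` as a subfield of `ℂ`,
where `√(-2) = i√2`. -/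
def Ff (p q : ℕ) : IntermediateField ℚ ℂ :=
  adjoin ℚ {((Real.sqrt (2 * p) : ℝ) : ℂ), ((Real.sqrt (2 * q) : ℝ) : ℂ),
    Complex.I * ((Real.sqrt 2 : ℝ) : ℂ)}

/-- If `a * b = p₁ * p₂ * z ^ 2` with `a`, `b` coprime, then the primes `p₁`, `p₂` are distributed
over `a` and `b`, the cofactors being squares. -/
lemma exists_sq_of_coprime_mul_eq {a b p₁ p₂ z : ℕ} (h₁ : p₁.Prime) (h₂ : p₂.Prime)
    (h₁₂ : p₁ ≠ p₂) (hab : a.Coprime b) (h : a * b = p₁ * p₂ * z ^ 2) :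
    ∃ m n : ℕ, (a = m ^ 2 ∧ b = p₁ * p₂ * n ^ 2) ∨ (a = p₁ * p₂ * m ^ 2 ∧ b = n ^ 2) ∨
      (a = p₁ * m ^ 2 ∧ b = p₂ * n ^ 2) ∨ (a = p₂ * m ^ 2 ∧ b = p₁ * n ^ 2) := by
  have key : ∀ a' b' : ℕ, a'.Coprime b' → a' * b' = z ^ 2 → ∃ m n, a' = m ^ 2 ∧ b' = n ^ 2 := by
    intro a' b' hc he
    obtain ⟨m, hm⟩ := exists_eq_pow_of_mul_eq_pow (Nat.isUnit_iff.2 hc) he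
    obtain ⟨n, hn⟩ := exists_eq_pow_of_mul_eq_pow (Nat.isUnit_iff.2 hc.symm) (mul_comm a' b' ▸ he)
    exact ⟨m, n, hm, hn⟩
  have hp : 0 < p₁ := h₁.pos
  have hq : 0 < p₂ := h₂.pos
  have hcop : p₁.Coprime p₂ := (Nat.coprime_primes h₁ h₂).2 h₁₂
  have d₁ : p₁ ∣ a * b := h ▸ Dvd.intro _ (by rw [mul_assoc])
  have d₂ : p₂ ∣ a * b := h ▸ Dvd.intro_left (p₁ * z ^ 2) (by ring)
  rcases (Nat.Prime.dvd_mul h₁).1 d₁ with ha | hb <;> rcases (Nat.Prime.dvd_mul h₂).1 d₂ with ha' | hb'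
  · obtain ⟨c, rfl⟩ := hcop.mul_dvd_of_dvd_of_dvd ha ha'
    obtain ⟨m, n, rfl, rfl⟩ := key c b (Nat.Coprime.coprime_mul_left hab)
      (by apply Nat.eq_of_mul_eq_mul_left (Nat.mul_pos hp hq); linarith)
    exact ⟨m, n, by tauto⟩
  · obtain ⟨c, rfl⟩ := ha
    obtain ⟨d, rfl⟩ := hb'
    obtain ⟨m, n, rfl, rfl⟩ := key c d (Nat.Coprime.coprime_mul_left
      (Nat.Coprime.coprime_mul_left_right hab))
      (by apply Nat.eq_of_mul_eq_mul_left (Nat.mul_pos hp hq); linarith)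
    exact ⟨m, n, by tauto⟩
  · obtain ⟨c, rfl⟩ := ha'
    obtain ⟨d, rfl⟩ := hb
    obtain ⟨m, n, rfl, rfl⟩ := key c d (Nat.Coprime.coprime_mul_left
      (Nat.Coprime.coprime_mul_left_right hab))
      (by apply Nat.eq_of_mul_eq_mul_left (Nat.mul_pos hp hq); linarith)
    exact ⟨m, n, by tauto⟩
  · obtain ⟨c, rfl⟩ := hcop.mul_dvd_of_dvd_of_dvd hb hb'
    obtain ⟨m, n, rfl, rfl⟩ := key a c (Nat.Coprime.coprime_mul_left_right hab)
      (by apply Nat.eq_of_mul_eq_mul_left (Nat.mul_pos hp hq); linarith)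
    exact ⟨m, n, by tauto⟩

/-- A solution of the Pell equation that is minimal among the solutions with `0 < y`. -/
lemma exists_minimal_pell {d : ℕ} (hd : ¬ IsSquare d) (hd0 : 0 < d) :
    ∃ x y : ℕ, 0 < y ∧ x ^ 2 = d * y ^ 2 + 1 ∧
      ∀ x' y' : ℕ, 0 < y' → x' ^ 2 = d * y' ^ 2 + 1 → y ≤ y' := by
  have hex : ∃ y : ℕ, 0 < y ∧ ∃ x : ℕ, x ^ 2 = d * y ^ 2 + 1 := by
    obtain ⟨x, y, hxy, hy⟩ := Pell.exists_of_not_isSquare (d := (d : ℤ)) (by exact_mod_cast hd0)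
      (by simpa using hd)
    refine ⟨y.natAbs, Int.natAbs_pos.2 hy, x.natAbs, ?_⟩
    zify
    simp only [sq_abs]
    linarith
  classical
  obtain ⟨h0, x, hx⟩ := Nat.find_spec hex
  exact ⟨x, Nat.find hex, h0, hx, fun x' y' h h' => Nat.find_min' hex ⟨h, x', h'⟩⟩

lemma not_isSquare_mul_primes {p₁ p₂ : ℕ} (h₁ : p₁.Prime) (h₂ : p₂.Prime) (h₁₂ : p₁ ≠ p₂) :
    ¬ IsSquare (p₁ * p₂) := by
  rintro ⟨r, hr⟩
  have : p₁ ∣ r := by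
    have : p₁ ∣ r * r := hr ▸ dvd_mul_right _ _
    simpa using (Nat.Prime.dvd_mul h₁).1 this
  obtain ⟨c, rfl⟩ := this
  have h3 : p₂ = p₁ * (c * c) := Nat.eq_of_mul_eq_mul_left h₁.pos (by linarith)
  exact h₁₂ ((Nat.prime_dvd_prime_iff_eq h₁ h₂).1 (h3 ▸ dvd_mul_right _ _))

/-- Halving the Pell equation for `p₁ p₂`: from a minimal solution with odd `x`. -/
lemma pell_split_odd {p₁ p₂ : ℕ} (h₁ : p₁.Prime) (h₂ : p₂.Prime) (h₁₂ : p₁ ≠ p₂)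
    {x y : ℕ} (hy : 0 < y) (hxy : x ^ 2 = p₁ * p₂ * y ^ 2 + 1)
    (hmin : ∀ x' y' : ℕ, 0 < y' → x' ^ 2 = p₁ * p₂ * y' ^ 2 + 1 → y ≤ y')
    (hx : x % 2 = 1) (hye : y % 2 = 0) :
    ∃ m n : ℕ, m ^ 2 + 1 = p₁ * p₂ * n ^ 2 ∨ p₁ * m ^ 2 + 1 = p₂ * n ^ 2 ∨
      p₂ * m ^ 2 + 1 = p₁ * n ^ 2 := by
  obtain ⟨u, rfl⟩ : ∃ u, x = 2 * u + 1 := ⟨x / 2, by omega⟩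
  obtain ⟨z, rfl⟩ : ∃ z, y = 2 * z := ⟨y / 2, by omega⟩
  have hu : u * (u + 1) = p₁ * p₂ * z ^ 2 := by nlinarith
  obtain ⟨m, n, h | h | h | h⟩ := exists_sq_of_coprime_mul_eq h₁ h₂ h₁₂
    (Nat.coprime_self_add_right.2 (Nat.coprime_one_right u)) hu
  · exact ⟨m, n, Or.inl (by rw [← h.1, h.2])⟩
  · exfalso
    have hz : z ^ 2 = (m * n) ^ 2 := by
      apply Nat.eq_of_mul_eq_mul_left (Nat.mul_pos h₁.pos h₂.pos)
      rw [← hu, h.2, h.1]; ring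
    have hz' : z = m * n := Nat.pow_left_injective (n := 2) (by norm_num) hz
    have hm : 0 < m := by
      rcases Nat.eq_zero_or_pos m with h0 | h0
      · simp [h0] at hz'; omega
      · exact h0
    have hn : 0 < n := by
      rcases Nat.eq_zero_or_pos n with h0 | h0
      · simp [h0] at hz'; omega
      · exact h0
    have := hmin n m hm (by rw [← h.2, h.1])
    nlinarith
  · exact ⟨m, n, Or.inr (Or.inl (by rw [← h.1, h.2]))⟩
  · exact ⟨m, n, Or.inr (Or.inr (by rw [← h.1, h.2]))⟩

lemma odd_even_of_pell_two_mul {q x y : ℕ} (hxy : x ^ 2 = 2 * q * y ^ 2 + 1)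
    (hq : q % 2 = 1) : x % 2 = 1 ∧ y % 2 = 0 := by
  have hx : x % 2 = 1 := by
    have : (x ^ 2) % 2 = 1 := by rw [hxy, mul_assoc]; omega
    rcases Nat.mod_two_eq_zero_or_one x with h | h
    · rw [Nat.pow_mod, h] at this; simp at this
    · exact h
  refine ⟨hx, ?_⟩
  by_contra hy
  obtain ⟨u, rfl⟩ : ∃ u, x = 2 * u + 1 := ⟨x / 2, by omega⟩
  obtain ⟨v, rfl⟩ : ∃ z, y = 2 * z + 1 := ⟨y / 2, by omega⟩
  obtain ⟨w, rfl⟩ : ∃ z, q = 2 * z + 1 := ⟨q / 2, by omega⟩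
  have : 2 * (u ^ 2 + u) = (2 * w + 1) * (4 * (v ^ 2 + v) + 1) := by nlinarith
  have h2 := congrArg (· % 2) this
  simp [Nat.mul_mod, Nat.add_mod] at h2

section
variable {p q : ℕ}

lemma legendreSym_two_eq [Fact p.Prime] (hp : p % 8 = 5) :
    legendreSym p 2 = -1 ∧ legendreSym p (-2) = -1 ∧ legendreSym p (-1) = 1 := by
  have h2 : p ≠ 2 := by rintro rfl; omega
  have a : legendreSym p 2 = -1 := by
    rw [legendreSym.at_two h2, ZMod.χ₈_nat_mod_eight, hp]; rfl
  have b : legendreSym p (-1) = 1 := by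
    rw [legendreSym.at_neg_one h2, ZMod.χ₄_nat_mod_four, show p % 4 = 1 by omega]; rfl
  refine ⟨a, ?_, b⟩
  rw [show (-2 : ℤ) = -1 * 2 by norm_num, legendreSym.mul, a, b]; norm_num

lemma legendreSym_two_eq' [Fact q.Prime] (hq : q % 8 = 7) :
    legendreSym q 2 = 1 ∧ legendreSym q (-2) = -1 ∧ legendreSym q (-1) = -1 := by
  have h2 : q ≠ 2 := by rintro rfl; omega
  have a : legendreSym q 2 = 1 := by
    rw [legendreSym.at_two h2, ZMod.χ₈_nat_mod_eight, hq]; rfl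
  have b : legendreSym q (-1) = -1 := by
    rw [legendreSym.at_neg_one h2, ZMod.χ₄_nat_mod_four, show q % 4 = 3 by omega]; rfl
  refine ⟨a, ?_, b⟩
  rw [show (-2 : ℤ) = -1 * 2 by norm_num, legendreSym.mul, a, b]; norm_num

lemma not_dvd_one_int (hp : p.Prime) : ¬ (p : ℤ) ∣ 1 := fun h =>
  hp.one_lt.ne' (by simpa using Int.natAbs_dvd_natAbs.2 h)

lemma exists_neg_one_norm_two_mul (hp : p.Prime) (hp8 : p % 8 = 5) :
    ∃ e f : ℤ, e ^ 2 - 2 * p * f ^ 2 = -1 := by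
  have := Fact.mk hp
  obtain ⟨a, b, -⟩ := legendreSym_two_eq hp8
  have h2 : 2 ≠ p := by rintro rfl; omega
  obtain ⟨x, y, hy, hxy, hmin⟩ := exists_minimal_pell (not_isSquare_mul_primes Nat.prime_two hp h2)
    (Nat.mul_pos two_pos hp.pos)
  obtain ⟨hx, hye⟩ := odd_even_of_pell_two_mul hxy (by omega)
  obtain ⟨m, n, h | h | h⟩ := pell_split_odd Nat.prime_two hp h2 hy hxy hmin hx hye
  · exact ⟨m, n, by zify at h; linarith⟩
  · zify at h
    exact absurd (legendreSym.prime_dvd_of_eq_neg_one b (x := 1) (y := m) ⟨n ^ 2, by linarith⟩).1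
      (not_dvd_one_int hp)
  · zify at h
    exact absurd (legendreSym.prime_dvd_of_eq_neg_one a (x := 1) (y := n) ⟨-m ^ 2, by linarith⟩).1
      (not_dvd_one_int hp)

lemma exists_norm_two (hq : q.Prime) (hq8 : q % 8 = 7) :
    ∃ x y : ℤ, (2 * x) ^ 2 - 2 * q * y ^ 2 = 2 := by
  have := Fact.mk hq
  obtain ⟨-, b, c⟩ := legendreSym_two_eq' hq8
  have h2 : 2 ≠ q := by rintro rfl; omega
  obtain ⟨x, y, hy, hxy, hmin⟩ := exists_minimal_pell (not_isSquare_mul_primes Nat.prime_two hq h2)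
    (Nat.mul_pos two_pos hq.pos)
  obtain ⟨hx, hye⟩ := odd_even_of_pell_two_mul hxy (by omega)
  obtain ⟨m, n, h | h | h⟩ := pell_split_odd Nat.prime_two hq h2 hy hxy hmin hx hye
  · zify at h
    exact absurd (legendreSym.prime_dvd_of_eq_neg_one c (x := m) (y := 1) ⟨2 * n ^ 2, by linarith⟩).2
      (not_dvd_one_int hq)
  · zify at h
    exact absurd (legendreSym.prime_dvd_of_eq_neg_one b (x := 1) (y := m) ⟨n ^ 2, by linarith⟩).1
      (not_dvd_one_int hq)
  · exact ⟨n, m, by zify at h; linarith⟩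

lemma exists_mul_sq_sub_mul_sq (hp : p.Prime) (hp8 : p % 8 = 5) (hq : q.Prime) (hq8 : q % 8 = 7)
    (hpq : jacobiSym p q = -1) : ∃ a b : ℤ, p * a ^ 2 - q * b ^ 2 = -2 := by
  have := Fact.mk hq
  have := Fact.mk hp
  obtain ⟨a2, b2, c2⟩ := legendreSym_two_eq' hq8
  obtain ⟨a1, b1, c1⟩ := legendreSym_two_eq hp8
  have hq' : legendreSym q p = -1 := by rwa [jacobiSym.legendreSym.to_jacobiSym]
  have hp' : legendreSym p q = -1 := by
    rw [legendreSym.quadratic_reciprocity_one_mod_four (by omega) (by rintro rfl; omega)] at hq'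
    exact hq'
  have hp'' : legendreSym p (-q) = -1 := by
    rw [neg_eq_neg_one_mul, legendreSym.mul, c1, hp', one_mul]
  have h2 : p ≠ q := by rintro rfl; omega
  obtain ⟨x, y, hy, hxy, hmin⟩ := exists_minimal_pell (not_isSquare_mul_primes hp hq h2)
    (Nat.mul_pos hp.pos hq.pos)
  rcases Nat.mod_two_eq_zero_or_one x with hx | hx
  · have hx0 : 1 ≤ x := by
      by_contra h0
      have : x = 0 := by omega
      subst this; omega
    obtain ⟨v, rfl⟩ : ∃ v, x = v + 1 := ⟨x - 1, by omega⟩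
    have hv : v * (v + 2) = p * q * y ^ 2 := by nlinarith
    have hc : v.Coprime (v + 2) :=
      Nat.coprime_self_add_right.2 (Nat.coprime_two_right.2 (Nat.odd_iff.2 (by omega)))
    obtain ⟨m, n, ⟨h, h'⟩ | ⟨h, h'⟩ | ⟨h, h'⟩ | ⟨h, h'⟩⟩ :=
      exists_sq_of_coprime_mul_eq hp hq h2 hc hv <;> zify at h h'
    · exact absurd (legendreSym.prime_dvd_of_eq_neg_one b1 (x := m) (y := 1)
        ⟨q * n ^ 2, by linarith⟩).2 (not_dvd_one_int hp)
    · exact absurd (legendreSym.prime_dvd_of_eq_neg_one a1 (x := n) (y := 1)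
        ⟨q * m ^ 2, by linarith⟩).2 (not_dvd_one_int hp)
    · exact ⟨m, n, by linarith⟩
    · exfalso
      have h3 : legendreSym q (2 * p) = -1 := by rw [legendreSym.mul, a2, hq', one_mul]
      have := (legendreSym.prime_dvd_of_eq_neg_one h3 (x := 2) (y := n) ⟨-2 * m ^ 2, by
        have : (p : ℤ) * n ^ 2 = q * m ^ 2 + 2 := by linarith
        rw [mul_assoc, this]; ring⟩).1
      have := Int.le_of_dvd (by norm_num) this
      omega
  · have hye : y % 2 = 0 := by
      by_contra hy'
      have h1 : (x ^ 2) % 2 = 1 := by rw [Nat.pow_mod, hx]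
      have h3 : (p * q * y ^ 2) % 2 = 1 := by
        rw [Nat.mul_mod, Nat.mul_mod p q, Nat.pow_mod, show p % 2 = 1 by omega,
          show q % 2 = 1 by omega, show y % 2 = 1 by omega]
      omega
    obtain ⟨m, n, h | h | h⟩ := pell_split_odd hp hq h2 hy hxy hmin hx hye
    · zify at h
      exact absurd (legendreSym.prime_dvd_of_eq_neg_one c2 (x := m) (y := 1) ⟨p * n ^ 2, by linarith⟩).2
        (not_dvd_one_int hq)
    · zify at h
      exact absurd (legendreSym.prime_dvd_of_eq_neg_one hp' (x := 1) (y := n) ⟨-m ^ 2, by linarith⟩).1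
        (not_dvd_one_int hp)
    · zify at h
      exact absurd (legendreSym.prime_dvd_of_eq_neg_one hp'' (x := 1) (y := m) ⟨n ^ 2, by linarith⟩).1
        (not_dvd_one_int hp)

end

/-- Three `ℓ`-adic numbers, not all zero, have a common multiple by a nonzero scalar that is a
triple of `ℓ`-adic integers one of which is `1`. -/
lemma Padic.exists_primitive {ℓ : ℕ} [Fact ℓ.Prime] {x y z : ℚ_[ℓ]} (hz : z ≠ 0) :
    ∃ (c : ℚ_[ℓ]) (x' y' z' : ℤ_[ℓ]), c ≠ 0 ∧ x = c * x' ∧ y = c * y' ∧ z = c * z' ∧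
      (x' = 1 ∨ y' = 1 ∨ z' = 1) := by
  have main : ∀ c : ℚ_[ℓ], ‖x‖ ≤ ‖c‖ → ‖y‖ ≤ ‖c‖ → ‖z‖ ≤ ‖c‖ → (x = c ∨ y = c ∨ z = c) →
      ∃ (c : ℚ_[ℓ]) (x' y' z' : ℤ_[ℓ]), c ≠ 0 ∧ x = c * x' ∧ y = c * y' ∧ z = c * z' ∧
        (x' = 1 ∨ y' = 1 ∨ z' = 1) := by
    intro c hx hy hz' h
    have hc0 : 0 < ‖c‖ := (norm_pos_iff.2 hz).trans_le hz'
    have hc : c ≠ 0 := norm_pos_iff.1 hc0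
    have hn : ∀ w : ℚ_[ℓ], ‖w‖ ≤ ‖c‖ → ‖w / c‖ ≤ 1 := fun w hw => by
      rw [norm_div]; exact (div_le_one hc0).2 hw
    refine ⟨c, ⟨x / c, hn x hx⟩, ⟨y / c, hn y hy⟩, ⟨z / c, hn z hz'⟩, hc, ?_, ?_, ?_, ?_⟩
    · simp; field_simp
    · simp; field_simp
    · simp; field_simp
    · rcases h with h | h | h
      · left; apply PadicInt.ext; simp [h, hc]
      · right; left; apply PadicInt.ext; simp [h, hc]
      · right; right; apply PadicInt.ext; simp [h, hc]
  rcases le_total ‖x‖ ‖y‖ with h1 | h1 <;> rcases le_total ‖y‖ ‖z‖ with h2 | h2 <;>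
    rcases le_total ‖x‖ ‖z‖ with h3 | h3
  · exact main z h3 h2 le_rfl (by tauto)
  · exact main z (h1.trans h2) h2 le_rfl (by tauto)
  · exact main y h1 le_rfl h2 (by tauto)
  · exact main y h1 le_rfl h2 (by tauto)
  · exact main z h3 h2 le_rfl (by tauto)
  · exact main x le_rfl h1 h3 (by tauto)
  · exact main x le_rfl h1 (h2.trans h1) (by tauto)
  · exact main x le_rfl h1 h3 (by tauto)

section two
variable {p : ℕ}

lemma PadicInt.toZModPow_natCast_eq_five (hp : p % 8 = 5) :
    (PadicInt.toZModPow 3 (p : ℤ_[2]) : ZMod (2 ^ 3)) = 5 := by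
  rw [map_natCast]
  exact (ZMod.natCast_eq_natCast_iff p 5 8).2 hp

lemma Padic.eq_zero_of_sq_add_two_mul_sq (hp : p % 8 = 5) {x y z : ℚ_[2]}
    (h : x ^ 2 + 2 * y ^ 2 = p * z ^ 2) : z = 0 := by
  by_contra hz
  obtain ⟨c, x', y', z', hc, rfl, rfl, rfl, h1⟩ := Padic.exists_primitive (x := x) (y := y) hz
  have h2 : x' ^ 2 + 2 * y' ^ 2 = p * z' ^ 2 := by
    have : c ^ 2 * ((x' : ℚ_[2]) ^ 2 + 2 * y' ^ 2) = c ^ 2 * (p * z' ^ 2) := by linear_combination h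
    apply PadicInt.ext
    push_cast
    exact mul_left_cancel₀ (pow_ne_zero 2 hc) this
  have h3 := congrArg (PadicInt.toZModPow 3) h2
  simp only [map_add, map_mul, map_pow, PadicInt.toZModPow_natCast_eq_five hp, map_ofNat] at h3
  have h4 : PadicInt.toZModPow 3 x' = 1 ∨ PadicInt.toZModPow 3 y' = 1 ∨
      PadicInt.toZModPow 3 z' = 1 := by
    rcases h1 with h | h | h <;> simp [h]
  revert h3 h4
  generalize PadicInt.toZModPow 3 x' = X
  generalize PadicInt.toZModPow 3 y' = Y
  generalize PadicInt.toZModPow 3 z' = Z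
  have : ∀ X Y Z : ZMod 8, X ^ 2 + 2 * Y ^ 2 = 5 * Z ^ 2 → ¬ (X = 1 ∨ Y = 1 ∨ Z = 1) := by decide
  exact this X Y Z

lemma Padic.eq_zero_of_sq_add_mul_sq (hp : p % 8 = 5) {x y z : ℚ_[2]}
    (h : x ^ 2 + p * y ^ 2 = -(p * z ^ 2)) : z = 0 := by
  by_contra hz
  obtain ⟨c, x', y', z', hc, rfl, rfl, rfl, h1⟩ := Padic.exists_primitive (x := x) (y := y) hz
  have h2 : x' ^ 2 + p * y' ^ 2 = -(p * z' ^ 2) := by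
    have : c ^ 2 * ((x' : ℚ_[2]) ^ 2 + p * y' ^ 2) = c ^ 2 * (-(p * z' ^ 2)) := by
      linear_combination h
    apply PadicInt.ext
    push_cast
    exact mul_left_cancel₀ (pow_ne_zero 2 hc) this
  have h3 := congrArg (PadicInt.toZModPow 3) h2
  simp only [map_add, map_mul, map_pow, map_neg, PadicInt.toZModPow_natCast_eq_five hp] at h3
  have h4 : PadicInt.toZModPow 3 x' = 1 ∨ PadicInt.toZModPow 3 y' = 1 ∨
      PadicInt.toZModPow 3 z' = 1 := by
    rcases h1 with h | h | h <;> simp [h]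
  revert h3 h4
  generalize PadicInt.toZModPow 3 x' = X
  generalize PadicInt.toZModPow 3 y' = Y
  generalize PadicInt.toZModPow 3 z' = Z
  have : ∀ X Y Z : ZMod 8, X ^ 2 + 5 * Y ^ 2 = -(5 * Z ^ 2) → ¬ (X = 1 ∨ Y = 1 ∨ Z = 1) := by
    decide
  exact this X Y Z

end two

section odd
variable {p : ℕ} [Fact p.Prime]

lemma PadicInt.dvd_of_toZMod_eq_zero {x : ℤ_[p]} (h : PadicInt.toZMod x = 0) :
    (p : ℤ_[p]) ∣ x := by
  have : x ∈ RingHom.ker (PadicInt.toZMod (p := p)) := h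
  rwa [PadicInt.ker_toZMod, PadicInt.maximalIdeal_eq_span_p, Ideal.mem_span_singleton] at this

lemma Padic.eq_zero_of_sq_add_mul_sq_eq_two_mul_sq (hp : legendreSym p 2 = -1) {x y z : ℚ_[p]}
    (h : x ^ 2 + p * y ^ 2 = 2 * z ^ 2) : z = 0 := by
  by_contra hz
  obtain ⟨c, x', y', z', hc, rfl, rfl, rfl, h1⟩ := Padic.exists_primitive (x := x) (y := y) hz
  have h2 : x' ^ 2 + p * y' ^ 2 = 2 * z' ^ 2 := by
    have : c ^ 2 * ((x' : ℚ_[p]) ^ 2 + p * y' ^ 2) = c ^ 2 * (2 * z' ^ 2) := by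
      linear_combination h
    apply PadicInt.ext
    push_cast
    exact mul_left_cancel₀ (pow_ne_zero 2 hc) this
  have h3 := congrArg (PadicInt.toZMod (p := p)) h2
  simp only [map_add, map_mul, map_pow, map_natCast, map_ofNat, CharP.cast_eq_zero, zero_mul,
    add_zero] at h3
  obtain ⟨hx, hz'⟩ := legendreSym.eq_zero_mod_of_eq_neg_one hp
    (x := PadicInt.toZMod x') (y := PadicInt.toZMod z') (by push_cast; rw [h3]; ring)
  have hp0 : (p : ℤ_[p]) ≠ 0 := Nat.cast_ne_zero.2 (Fact.out : p.Prime).ne_zero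
  rcases h1 with h1 | h1 | h1
  · simp [h1] at hx
  · obtain ⟨a, rfl⟩ := PadicInt.dvd_of_toZMod_eq_zero hx
    obtain ⟨b, rfl⟩ := PadicInt.dvd_of_toZMod_eq_zero hz'
    subst h1
    have h4 : (p : ℤ_[p]) * (p * (2 * b ^ 2 - a ^ 2)) = p * 1 := by linear_combination -h2
    exact PadicInt.prime_p.not_isUnit (IsUnit.of_mul_eq_one _ (mul_left_cancel₀ hp0 h4))
  · simp [h1] at hz'

lemma Rat.eq_zero_of_sq_add_mul_sq_eq_two_mul_sq (hp : legendreSym p 2 = -1) {x y z : ℚ}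
    (h : x ^ 2 + p * y ^ 2 = 2 * z ^ 2) : z = 0 := by
  have h' : (x : ℚ_[p]) ^ 2 + p * (y : ℚ_[p]) ^ 2 = 2 * (z : ℚ_[p]) ^ 2 := by exact_mod_cast h
  exact_mod_cast Padic.eq_zero_of_sq_add_mul_sq_eq_two_mul_sq hp h'

lemma PadicInt.exists_sq_eq_of_legendreSym {n : ℤ} (h2 : p ≠ 2) (hn : legendreSym p n = 1) :
    ∃ c : ℤ_[p], c ^ 2 = n := by
  have hn0 : (n : ZMod p) ≠ 0 := fun h => by
    rw [(legendreSym.eq_zero_iff p n).2 h] at hn; norm_num at hn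
  obtain ⟨a, ha⟩ := (legendreSym.eq_one_iff p hn0).1 hn
  have ha0 : a ≠ 0 := by rintro rfl; simp at ha; exact hn0 ha
  obtain ⟨b, hb⟩ : ∃ b : ℤ, (b : ZMod p) = a := ⟨a.val, by simp⟩
  have hb1 : ‖((2 * b : ℤ) : ℤ_[p])‖ = 1 := by
    rw [← not_ne_iff, ne_iff_lt_iff_le.2 (PadicInt.norm_le_one _), PadicInt.norm_int_lt_one_iff_dvd,
      ← ZMod.intCast_zmod_eq_zero_iff_dvd]
    push_cast
    rw [hb]
    refine mul_ne_zero ?_ ha0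
    intro h
    have : ((2 : ℕ) : ZMod p) = 0 := by exact_mod_cast h
    rw [ZMod.natCast_eq_zero_iff] at this
    exact h2 ((Nat.prime_dvd_prime_iff_eq Fact.out Nat.prime_two).1 this)
  obtain ⟨z, hz, -⟩ := hensels_lemma (F := (Polynomial.X ^ 2 - Polynomial.C (n : ℤ_[p])))
    (a := (b : ℤ_[p])) (by
      simp only [Polynomial.coe_aeval_eq_eval, Polynomial.eval_sub, Polynomial.eval_pow,
        Polynomial.eval_X, Polynomial.eval_C, Polynomial.derivative_sub, Polynomial.derivative_X_pow,
        Polynomial.derivative_C, Polynomial.eval_mul, sub_zero]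
      have h5 : ‖((b ^ 2 - n : ℤ) : ℤ_[p])‖ < 1 := by
        rw [PadicInt.norm_int_lt_one_iff_dvd, ← ZMod.intCast_zmod_eq_zero_iff_dvd]
        push_cast; rw [hb, ha]; ring
      push_cast at h5 hb1 ⊢
      simpa [hb1] using h5)
  refine ⟨z, ?_⟩
  simpa [sub_eq_zero] using hz

end odd

lemma PadicInt.exists_sq_eq_of_mod_eight {n : ℤ} (hn : n % 8 = 1) : ∃ c : ℤ_[2], c ^ 2 = n := by
  obtain ⟨z, hz, -⟩ := hensels_lemma (F := (Polynomial.X ^ 2 - Polynomial.C (n : ℤ_[2])))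
    (a := (1 : ℤ_[2])) (by
      simp only [Polynomial.coe_aeval_eq_eval, Polynomial.eval_sub, Polynomial.eval_pow,
        Polynomial.eval_X, Polynomial.eval_C, Polynomial.derivative_sub, Polynomial.derivative_X_pow,
        Polynomial.derivative_C, Polynomial.eval_mul, sub_zero]
      have h5 : ‖((1 - n : ℤ) : ℤ_[2])‖ ≤ (2 : ℕ) ^ (-(3 : ℕ) : ℤ) := by
        rw [PadicInt.norm_int_le_pow_iff_dvd]
        norm_num; omega
      have h6 : ‖(2 : ℤ_[2])‖ = 2⁻¹ := by
        simpa using PadicInt.norm_p (p := 2)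
      push_cast at h5 ⊢
      simp [h6]
      refine h5.trans_lt ?_
      norm_num)
  refine ⟨z, ?_⟩
  simpa [sub_eq_zero] using hz

/-- A quadratic field `ℚ(t)` with `t ^ 2 = n` embeds in `ℚ_ℓ` as soon as `n` is a square there. -/
lemma exists_ringHom_padic {F : Type*} [Field F] [CharZero F] {ℓ : ℕ} [Fact ℓ.Prime] {t : F}
    {n : ℤ} (ht : t ^ 2 = n) (hn : ¬ IsSquare (n : ℚ)) {c : ℤ_[ℓ]} (hc : c ^ 2 = n) :
    Nonempty (ℚ⟮t⟯ →+* ℚ_[ℓ]) := by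
  have hmon : (Polynomial.X ^ 2 - Polynomial.C (n : ℚ)).Monic :=
    Polynomial.monic_X_pow_sub_C _ two_ne_zero
  have hroot : Polynomial.aeval t (Polynomial.X ^ 2 - Polynomial.C (n : ℚ)) = 0 := by simp [ht]
  have hmin : minpoly ℚ t = Polynomial.X ^ 2 - Polynomial.C (n : ℚ) :=
    (minpoly.eq_of_irreducible_of_monic (X_pow_sub_C_irreducible_of_prime Nat.prime_two
      fun b hb => hn ⟨b, by rw [← hb, sq]⟩)
      hroot hmon).symm
  have hint : IsIntegral ℚ t := ⟨_, hmon, hroot⟩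
  have hc' : (c : ℚ_[ℓ]) ^ 2 = n := by exact_mod_cast congrArg (fun x : ℤ_[ℓ] => (x : ℚ_[ℓ])) hc
  refine ⟨((algHomAdjoinIntegralEquiv ℚ hint (K := ℚ_[ℓ])).symm ⟨(c : ℚ_[ℓ]), ?_⟩).toRingHom⟩
  rw [hmin, Polynomial.mem_aroots]
  exact ⟨hmon.ne_zero, by simp [hc']⟩

section classes
variable {R : Type*} [CommRing R] [IsDedekindDomain R]

open nonZeroDivisors Classical in
/-- The class of a nonzero ideal, with the junk value `1` at `⊥`. -/
def idealClass (I : Ideal R) : ClassGroup R :=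
  if h : I ∈ (Ideal R)⁰ then ClassGroup.mk0 ⟨I, h⟩ else 1

lemma idealClass_of_ne {I : Ideal R} (h : I ≠ ⊥) :
    idealClass I = ClassGroup.mk0 ⟨I, mem_nonZeroDivisors_iff_ne_zero.2 h⟩ :=
  dif_pos _

lemma idealClass_mul {I J : Ideal R} (hI : I ≠ ⊥) (hJ : J ≠ ⊥) :
    idealClass (I * J) = idealClass I * idealClass J := by
  rw [idealClass_of_ne hI, idealClass_of_ne hJ, idealClass_of_ne (mul_ne_zero hI hJ), ← map_mul]
  rfl

lemma idealClass_eq_one {I : Ideal R} (hI : I ≠ ⊥) : idealClass I = 1 ↔ I.IsPrincipal := by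
  rw [idealClass_of_ne hI, ClassGroup.mk0_eq_one_iff]

lemma idealClass_span (x : R) : idealClass (Ideal.span {x}) = 1 := by
  by_cases hx : Ideal.span {x} = ⊥
  · rw [hx]; simp [idealClass]
  · exact (idealClass_eq_one hx).2 ⟨x, rfl⟩

lemma idealClass_eq_iff {I J : Ideal R} (hI : I ≠ ⊥) (hJ : J ≠ ⊥) :
    idealClass I = idealClass J ↔
      ∃ x y : R, x ≠ 0 ∧ y ≠ 0 ∧ Ideal.span {x} * I = Ideal.span {y} * J := by
  rw [idealClass_of_ne hI, idealClass_of_ne hJ, ClassGroup.mk0_eq_mk0_iff]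
  simp only [exists_prop, exists_and_left]

lemma exists_idealClass_eq (c : ClassGroup R) : ∃ I : Ideal R, I ≠ ⊥ ∧ idealClass I = c := by
  obtain ⟨⟨I, hI⟩, rfl⟩ := ClassGroup.mk0_surjective c
  exact ⟨I, nonZeroDivisors.ne_zero hI, idealClass_of_ne (nonZeroDivisors.ne_zero hI)⟩

lemma idealClass_pow {I : Ideal R} (hI : I ≠ ⊥) (n : ℕ) :
    idealClass (I ^ n) = idealClass I ^ n := by
  induction n with
  | zero => simpa using idealClass_span (1 : R)
  | succ n ih => rw [pow_succ, idealClass_mul (pow_ne_zero n hI) hI, ih, pow_succ]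

end classes

/-- `M = L(r)` is a quadratic extension with `r ^ 2 = d ∈ L`. -/
structure IsQuad (L M : Type*) [Field L] [Field M] [Algebra L M] (r : M) (d : L) : Prop where
  sq : r ^ 2 = algebraMap L M d
  notMem : r ∉ Set.range (algebraMap L M)
  span : ∀ z : M, ∃ X Y : L, z = algebraMap L M X + algebraMap L M Y * r

namespace IsQuad
variable {L M : Type*} [Field L] [Field M] [Algebra L M] {r : M} {d : L}

lemma ne_zero (h : IsQuad L M r d) : r ≠ 0 := by
  rintro rfl; exact h.notMem ⟨0, by simp⟩

lemma linearIndependent (h : IsQuad L M r d) {X Y : L}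
    (hXY : algebraMap L M X + algebraMap L M Y * r = 0) : X = 0 ∧ Y = 0 := by
  have hY : Y = 0 := by
    by_contra hY
    refine h.notMem ⟨-X / Y, ?_⟩
    have : algebraMap L M Y ≠ 0 := by simpa using hY
    rw [map_div₀, map_neg]
    field_simp
    linear_combination -hXY
  subst hY
  simpa using hXY

lemma isSquare_of (h : IsQuad L M r d) [NeZero (2 : M)] {c : L}
    (hc : IsSquare (algebraMap L M c)) : IsSquare c ∨ IsSquare (d * c) := by
  obtain ⟨z, hz⟩ := hc
  obtain ⟨X, Y, rfl⟩ := h.span z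
  have h1 : algebraMap L M (X ^ 2 + d * Y ^ 2 - c) + algebraMap L M (2 * X * Y) * r = 0 := by
    have h2 := h.sq
    simp only [map_sub, map_add, map_mul, map_pow, map_ofNat]
    linear_combination -hz - (algebraMap L M Y) ^ 2 * h2
  obtain ⟨h2, h3⟩ := h.linearIndependent h1
  have h20 : (2 : L) ≠ 0 := fun h => NeZero.ne (2 : M) (by
    simpa only [map_ofNat, map_zero] using congrArg (algebraMap L M) h)
  rcases mul_eq_zero.1 h3 with h3 | h3
  · have h3 := (mul_eq_zero.1 h3).resolve_left h20
    subst h3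
    exact Or.inr ⟨d * Y, by linear_combination -d * h2⟩
  · subst h3
    exact Or.inl ⟨X, by linear_combination -h2⟩

lemma of_adjoin {F : Type*} [Field F] [Algebra L F] {r : F} (hsq : r ^ 2 = algebraMap L F d)
    {z : F} (hz : z ∈ L⟮r⟯) : ∃ X Y : L, z = algebraMap L F X + algebraMap L F Y * r := by
  have hint : IsIntegral L r := ⟨Polynomial.X ^ 2 - Polynomial.C d,
    Polynomial.monic_X_pow_sub_C _ two_ne_zero, by simp [hsq]⟩
  rw [← mem_toSubalgebra, adjoin_simple_toSubalgebra_of_isAlgebraic hint.isAlgebraic] at hz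
  induction hz using Algebra.adjoin_induction with
  | mem x hx => exact ⟨0, 1, by simpa using hx⟩
  | algebraMap x => exact ⟨x, 0, by simp⟩
  | add x y _ _ hx hy =>
    obtain ⟨X, Y, rfl⟩ := hx
    obtain ⟨X', Y', rfl⟩ := hy
    exact ⟨X + X', Y + Y', by simp only [map_add]; ring⟩
  | mul x y _ _ hx hy =>
    obtain ⟨X, Y, rfl⟩ := hx
    obtain ⟨X', Y', rfl⟩ := hy
    refine ⟨X * X' + d * (Y * Y'), X * Y' + X' * Y, ?_⟩
    simp only [map_add, map_mul]
    linear_combination (algebraMap L F Y) * algebraMap L F Y' * hsq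

lemma adjoin {F : Type*} [Field F] [Algebra L F] {r : F} (hsq : r ^ 2 = algebraMap L F d)
    (hr : r ∉ Set.range (algebraMap L F)) : IsQuad L L⟮r⟯ (AdjoinSimple.gen L r) d where
  sq := Subtype.ext (by simpa using hsq)
  notMem := by
    rintro ⟨x, hx⟩
    exact hr ⟨x, by simpa using congrArg (algebraMap L⟮r⟯ F) hx⟩
  span z := by
    obtain ⟨X, Y, h⟩ := of_adjoin hsq z.2
    exact ⟨X, Y, Subtype.ext (by simpa using h)⟩

lemma finrank_eq (h : IsQuad L M r d) : Module.finrank L M = 2 := by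
  have hli : LinearIndependent L ![1, r] := by
    rw [LinearIndependent.pair_iff]
    intro X Y hXY
    exact h.linearIndependent (by simpa [Algebra.smul_def] using hXY)
  have hsp : ⊤ ≤ Submodule.span L (Set.range ![1, r]) := by
    intro z _
    obtain ⟨X, Y, rfl⟩ := h.span z
    simp only [Matrix.range_cons, Matrix.range_empty, Set.union_empty, Set.singleton_union]
    exact Submodule.mem_span_pair.2 ⟨X, Y, by simp [Algebra.smul_def]⟩
  rw [Module.finrank_eq_card_basis (Module.Basis.mk hli hsp)]
  simp

variable [CharZero L]

lemma isGalois (h : IsQuad L M r d) : IsGalois L M := by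
  have : Algebra.IsQuadraticExtension L M := ⟨h.finrank_eq⟩
  infer_instance

lemma exists_conj (h : IsQuad L M r d) : ∃ σ : M ≃ₐ[L] M, σ r = -r := by
  have := h.isGalois
  have hfin : FiniteDimensional L M := Module.finite_of_finrank_eq_succ h.finrank_eq
  refine minpoly.exists_algEquiv_of_root' (Algebra.IsAlgebraic.isAlgebraic r) ?_
  have hdvd : minpoly L r ∣ Polynomial.X ^ 2 - Polynomial.C d := minpoly.dvd _ _ (by simp [h.sq])
  have hmin : minpoly L r = Polynomial.X ^ 2 - Polynomial.C d := by
    have hint : IsIntegral L r := Algebra.IsIntegral.isIntegral r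
    refine (Polynomial.eq_of_monic_of_dvd_of_natDegree_le (minpoly.monic hint)
      (Polynomial.monic_X_pow_sub_C _ two_ne_zero) hdvd ?_).symm
    rw [Polynomial.natDegree_X_pow_sub_C]
    exact (minpoly.two_le_natDegree_iff hint).2 h.notMem
  rw [hmin]
  simp [h.sq]

end IsQuad

/-- The nontrivial automorphism of a quadratic extension. -/
structure IsQuadConj {L M : Type*} [Field L] [Field M] [Algebra L M] (r : M) (d : L)
    (σ : M ≃ₐ[L] M) : Prop extends IsQuad L M r d where
  map_gen : σ r = -r

namespace IsQuadConj
variable {L M : Type*} [Field L] [Field M] [Algebra L M] {r : M} {d : L} {σ : M ≃ₐ[L] M}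

lemma apply (h : IsQuadConj r d σ) (X Y : L) :
    σ (algebraMap L M X + algebraMap L M Y * r) = algebraMap L M X - algebraMap L M Y * r := by
  simp [h.map_gen, sub_eq_add_neg]

lemma apply_apply (h : IsQuadConj r d σ) (z : M) : σ (σ z) = z := by
  obtain ⟨X, Y, rfl⟩ := h.span z
  simp [h.map_gen]

lemma exists_of_fixed (h : IsQuadConj r d σ) [NeZero (2 : M)] {z : M} (hz : σ z = z) :
    ∃ X, z = algebraMap L M X := by
  obtain ⟨X, Y, rfl⟩ := h.span z
  rw [h.apply] at hz
  have h1 : algebraMap L M Y * r = 0 := by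
    have : (2 : M) * (algebraMap L M Y * r) = 0 := by linear_combination -hz
    exact (mul_eq_zero.1 this).resolve_left (NeZero.ne _)
  exact ⟨X, by rw [h1, add_zero]⟩

lemma norm_eq (h : IsQuadConj r d σ) [CharZero L] (z : M) :
    algebraMap L M (Algebra.norm L z) = z * σ z := by
  have := h.isGalois
  have hfin : FiniteDimensional L M := Module.finite_of_finrank_eq_succ h.finrank_eq
  classical
  rw [Algebra.norm_eq_prod_automorphisms]
  have hM : CharZero M := charZero_of_injective_algebraMap (algebraMap L M).injective
  have hne : (1 : M ≃ₐ[L] M) ≠ σ := by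
    intro h1
    have h2 := h.map_gen
    rw [← h1, AlgEquiv.one_apply] at h2
    exact h.ne_zero (CharZero.eq_neg_self_iff.1 h2)
  have huniv : (Finset.univ : Finset (M ≃ₐ[L] M)) = {1, σ} := by
    symm
    apply Finset.eq_univ_of_card
    rw [Finset.card_pair hne, ← Nat.card_eq_fintype_card, IsGalois.card_aut_eq_finrank, h.finrank_eq]
  rw [huniv, Finset.prod_pair hne, AlgEquiv.one_apply]

lemma norm_add_mul (h : IsQuadConj r d σ) [CharZero L] (X Y : L) :
    Algebra.norm L (algebraMap L M X + algebraMap L M Y * r) = X ^ 2 - d * Y ^ 2 := by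
  apply (algebraMap L M).injective
  rw [h.norm_eq, h.apply]
  simp only [map_sub, map_mul, map_pow, ← h.sq]
  ring

end IsQuadConj

lemma IsQuad.exists_isQuadConj {L M : Type*} [Field L] [Field M] [Algebra L M] {r : M} {d : L}
    [CharZero L] (h : IsQuad L M r d) : ∃ σ : M ≃ₐ[L] M, IsQuadConj r d σ := by
  obtain ⟨σ, hσ⟩ := h.exists_conj
  exact ⟨σ, ⟨h, hσ⟩⟩

/-- A relative norm is of the form `X² - dY²` as soon as the top field contains `√d`. -/
lemma exists_norm_eq_sq_sub {k F : Type*} [Field k] [Field F] [Algebra k F] [CharZero k]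
    [FiniteDimensional k F] {r : F} {d : k} (hsq : r ^ 2 = algebraMap k F d)
    (hr : r ∉ Set.range (algebraMap k F)) (z : F) :
    ∃ X Y : k, Algebra.norm k z = X ^ 2 - d * Y ^ 2 := by
  obtain ⟨σ, hσ⟩ := (IsQuad.adjoin hsq hr).exists_isQuadConj
  obtain ⟨X, Y, h⟩ := hσ.span (Algebra.norm k⟮r⟯ z)
  refine ⟨X, Y, ?_⟩
  rw [← Algebra.norm_norm (S := k⟮r⟯), h, hσ.norm_add_mul]

section conj
variable {L M : Type*} [Field L] [Field M] [Algebra L M]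

/-- The action of an automorphism on the ring of integers. -/
def conjInt (σ : M ≃ₐ[L] M) : 𝓞 M ≃ₐ[𝓞 L] 𝓞 M := RingOfIntegers.mapAlgEquiv σ

@[simp]
lemma coe_conjInt (σ : M ≃ₐ[L] M) (x : 𝓞 M) : (conjInt σ x : M) = σ x := rfl

lemma Ideal.map_conjInt_mono (σ : M ≃ₐ[L] M) {I J : Ideal (𝓞 M)} (h : I ≤ J) :
    I.map (conjInt σ) ≤ J.map (conjInt σ) := Ideal.map_mono h

lemma Ideal.map_conjInt_mul (σ : M ≃ₐ[L] M) (I J : Ideal (𝓞 M)) :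
    (I * J).map (conjInt σ) = I.map (conjInt σ) * J.map (conjInt σ) := Ideal.map_mul _ I J

lemma Ideal.map_conjInt_pow (σ : M ≃ₐ[L] M) (I : Ideal (𝓞 M)) (n : ℕ) :
    (I ^ n).map (conjInt σ) = I.map (conjInt σ) ^ n := Ideal.map_pow _ I n

lemma Ideal.map_conjInt_span (σ : M ≃ₐ[L] M) (x : 𝓞 M) :
    (Ideal.span {x}).map (conjInt σ) = Ideal.span {conjInt σ x} := by
  rw [Ideal.map_span, Set.image_singleton]

lemma Ideal.map_conjInt_eq_bot (σ : M ≃ₐ[L] M) {I : Ideal (𝓞 M)} :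
    I.map (conjInt σ) = ⊥ ↔ I = ⊥ :=
  Ideal.map_eq_bot_iff_of_injective (conjInt σ).injective

lemma Ideal.map_conjInt_isPrime (σ : M ≃ₐ[L] M) {I : Ideal (𝓞 M)} (h : I.IsPrime) :
    (I.map (conjInt σ)).IsPrime := Ideal.map_isPrime_of_equiv _

lemma Ideal.map_conjInt_map (σ : M ≃ₐ[L] M) (I : Ideal (𝓞 L)) :
    (I.map (algebraMap (𝓞 L) (𝓞 M))).map (conjInt σ) = I.map (algebraMap (𝓞 L) (𝓞 M)) := by
  refine (Ideal.map_map (algebraMap (𝓞 L) (𝓞 M)) ((conjInt σ : 𝓞 M ≃ₐ[𝓞 L] 𝓞 M) : 𝓞 M →+* 𝓞 M)).trans ?_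
  congr 1
  ext x
  simp

lemma Ideal.map_algebraMap_ne_bot {J : Ideal (𝓞 L)} (hJ : J ≠ ⊥) : J.map (algebraMap (𝓞 L) (𝓞 M)) ≠ ⊥ := by
  rwa [Ne, Ideal.map_eq_bot_iff_of_injective (FaithfulSMul.algebraMap_injective _ _)]

end conj

namespace IsQuadConj
variable {L M : Type*} [Field L] [NumberField L] [Field M] [NumberField M] [Algebra L M]
  {r : M} {d : L} {σ : M ≃ₐ[L] M}

lemma algebraMap_intNorm (h : IsQuadConj r d σ) (x : 𝓞 M) :
    algebraMap (𝓞 L) (𝓞 M) (Algebra.intNorm (𝓞 L) (𝓞 M) x) = x * conjInt σ x := by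
  apply RingOfIntegers.ext
  have h1 := Algebra.algebraMap_intNorm (A := 𝓞 L) (B := 𝓞 M) (K := L) (L := M) x
  have h2 := congrArg (algebraMap L M) h1
  rw [h.norm_eq] at h2
  exact h2

lemma finrank_int (h : IsQuadConj r d σ) : Module.finrank (𝓞 L) (𝓞 M) = 2 := by
  rw [← IsFractionRing.finrank_eq (𝓞 L) L (𝓞 M) M, h.finrank_eq]

lemma eq_top_of_relNorm {I : Ideal (𝓞 M)} (hI : Ideal.relNorm (𝓞 L) I = ⊤) : I = ⊤ := by
  rw [← Ideal.absNorm_eq_one_iff, ← Ideal.absNorm_relNorm (𝓞 L) (𝓞 M) I, hI, Ideal.absNorm_top]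

lemma mul_conj (h : IsQuadConj r d σ) (I : Ideal (𝓞 M)) :
    I * I.map (conjInt σ) = (Ideal.relNorm (𝓞 L) I).map (algebraMap (𝓞 L) (𝓞 M)) := by
  by_cases hI : I = ⊥
  · simp [hI]
  have hN : Ideal.relNorm (𝓞 L) I ≠ ⊥ := by simpa using hI
  have hle : (Ideal.relNorm (𝓞 L) I).map (algebraMap (𝓞 L) (𝓞 M)) ≤ I * I.map (conjInt σ) := by
    rw [Ideal.map_relNorm, Ideal.span_le]
    rintro _ ⟨x, hx, rfl⟩
    simp only [Function.comp_apply, h.algebraMap_intNorm]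
    exact Ideal.mul_mem_mul hx (Ideal.mem_map_of_mem _ hx)
  obtain ⟨J, hJ⟩ := Ideal.dvd_iff_le.2 hle
  have h1 := congrArg (Ideal.relNorm (𝓞 L)) hJ
  rw [Ideal.relNorm_algebraMap, h.finrank_int, map_mul, map_mul, Ideal.relNorm_map_algEquiv, ← sq]
    at h1
  have h2 : Ideal.relNorm (𝓞 L) J = 1 := by
    have h3 := pow_ne_zero 2 hN
    exact (mul_left_cancel₀ h3 ((mul_one _).trans h1)).symm
  rw [hJ, eq_top_of_relNorm (I := J) (L := L) (by simpa using h2)]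
  simp

lemma stable_prime (h : IsQuadConj r d σ) {P : Ideal (𝓞 M)} (hP : P.IsPrime) (hP0 : P ≠ ⊥)
    (hs : P.map (conjInt σ) = P) :
    P = (P.under (𝓞 L)).map (algebraMap (𝓞 L) (𝓞 M)) ∨ ∀ x, x - conjInt σ x ∈ P := by
  have hmax : P.IsMaximal := hP.isMaximal hP0
  set p := P.under (𝓞 L) with hp
  have hpmax : p.IsMaximal := Ideal.IsMaximal.under (𝓞 L) P
  have hover : P.LiesOver p := ⟨rfl⟩
  have hrel := Ideal.relNorm_eq_pow_of_isMaximal P p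
  have hsq := h.mul_conj P
  rw [hs, hrel, Ideal.map_pow] at hsq
  have hle : p.map (algebraMap (𝓞 L) (𝓞 M)) ≤ P := Ideal.map_comap_le
  obtain ⟨Q, hQ⟩ := Ideal.dvd_iff_le.2 hle
  rcases hf : P.inertiaDeg (𝓞 L) with _ | _ | f
  · rw [hf, pow_zero, Ideal.one_eq_top] at hsq
    exact absurd (eq_top_iff.2 (hsq.ge.trans Ideal.mul_le_right)) hP.ne_top
  · right
    intro x
    rw [Ideal.inertiaDeg_eq_of_isMaximal p P, zero_add] at hf
    let := Ideal.Quotient.field p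
    have hbij := Algebra.finrank_eq_one_iff_bijective_algebraMap.1 hf
    obtain ⟨a, ha⟩ := hbij.2 (Ideal.Quotient.mk P x)
    obtain ⟨a, rfl⟩ := Ideal.Quotient.mk_surjective a
    rw [Ideal.Quotient.algebraMap_mk_of_liesOver, Ideal.Quotient.eq] at ha
    have ha' := Ideal.mem_map_of_mem (conjInt σ) ha
    rw [hs, map_sub, AlgEquiv.commutes] at ha'
    have := P.sub_mem ha' ha
    simpa using this
  · left
    rw [hf, hQ, mul_pow] at hsq
    have h2 : P ^ 2 ≠ 0 := pow_ne_zero 2 hP0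
    have h3 : P ^ 2 * (P ^ f * Q ^ (f + 2)) = P ^ 2 * 1 :=
      calc _ = P ^ (f + 1 + 1) * Q ^ (f + 1 + 1) := by ring
        _ = P ^ 2 * 1 := by rw [← hsq]; ring
    have h4 := mul_left_cancel₀ h2 h3
    have h5 : Q ∣ 1 := ⟨P ^ f * Q ^ (f + 1), by rw [← h4]; ring⟩
    rw [hQ, Ideal.isUnit_iff.1 (isUnit_of_dvd_one h5), Ideal.mul_top]

/-- A stable ideal is built from ideals of the base field and from stable primes with
trivial action on the residue field. -/
lemma idealClass_mem_of_stable (h : IsQuadConj r d σ) (H : Subgroup (ClassGroup (𝓞 M)))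
    (hH : ∀ J : Ideal (𝓞 L), J ≠ ⊥ → idealClass (J.map (algebraMap (𝓞 L) (𝓞 M))) ∈ H)
    {I : Ideal (𝓞 M)} (hI : I ≠ ⊥) (hs : I.map (conjInt σ) = I)
    (hP : ∀ P : Ideal (𝓞 M), P.IsPrime → P ≠ ⊥ → I ≤ P → P.map (conjInt σ) = P →
      (∀ x, x - conjInt σ x ∈ P) → idealClass P ∈ H) : idealClass I ∈ H := by
  induction I using WellFoundedGT.induction with
  | ind I ih =>
  by_cases htop : I = ⊤
  · subst htop
    rw [(idealClass_eq_one hI).2 inferInstance]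
    exact H.one_mem
  obtain ⟨P, hmax, hIP⟩ := Ideal.exists_le_maximal I htop
  have hP0 : P ≠ ⊥ := fun h => hI (le_bot_iff.1 (h ▸ hIP))
  have hstep : ∀ A J : Ideal (𝓞 M), I = A * J → A ≤ P → A.map (conjInt σ) = A →
      J.map (conjInt σ) = J ∧ J ≠ ⊥ ∧ A ≠ ⊥ ∧ idealClass J ∈ H := by
    intro A J hAJ hA hAs
    have hA0 : A ≠ ⊥ := by rintro rfl; exact hI (by simpa using hAJ)
    have hJ0 : J ≠ ⊥ := by rintro rfl; exact hI (by simpa using hAJ)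
    have hJs : J.map (conjInt σ) = J := by
      rw [hAJ, Ideal.map_conjInt_mul, hAs] at hs
      exact mul_left_cancel₀ hA0 hs
    refine ⟨hJs, hJ0, hA0, ih J ?_ hJ0 hJs ?_⟩
    · refine lt_of_le_of_ne (hAJ ▸ Ideal.mul_le_right) fun hEq => ?_
      rw [hEq] at hAJ
      have : A = 1 := mul_right_cancel₀ hJ0 ((hAJ.symm.trans (one_mul J).symm))
      exact hmax.ne_top (eq_top_iff.2 (by rw [← Ideal.one_eq_top, ← this]; exact hA))
    · exact fun Q h1 h2 h3 => hP Q h1 h2 (le_trans (hAJ ▸ Ideal.mul_le_right) h3)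
  by_cases hPs : P.map (conjInt σ) = P
  · obtain ⟨J, hJ⟩ := Ideal.dvd_iff_le.2 hIP
    obtain ⟨-, hJ0, -, hJH⟩ := hstep P J hJ le_rfl hPs
    rw [hJ, idealClass_mul hP0 hJ0]
    refine H.mul_mem ?_ hJH
    rcases h.stable_prime hmax.isPrime hP0 hPs with h1 | h1
    · rw [h1]
      refine hH _ fun h2 => hP0 ?_
      rw [h1, h2, Ideal.map_bot]
    · exact hP P hmax.isPrime hP0 hIP hPs h1
  · obtain ⟨J, hJ⟩ := Ideal.dvd_iff_le.2 hIP
    have hprime : Prime (P.map (conjInt σ)) := Ideal.prime_of_isPrime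
      (by rwa [Ne, Ideal.map_conjInt_eq_bot]) (Ideal.map_conjInt_isPrime σ hmax.isPrime)
    have hdvd : P.map (conjInt σ) ∣ P * J := by
      rw [← hJ, ← hs]
      exact Ideal.dvd_iff_le.2 (Ideal.map_conjInt_mono σ hIP)
    rcases hprime.dvd_or_dvd hdvd with h1 | ⟨J', h1⟩
    · refine absurd (hmax.eq_of_le ?_ (Ideal.dvd_iff_le.1 h1)).symm hPs
      exact (Ideal.map_conjInt_isPrime σ hmax.isPrime).ne_top
    · have h2 : I = (P * P.map (conjInt σ)) * J' := by rw [hJ, h1, mul_assoc]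
      obtain ⟨-, hJ0, hA0, hJH⟩ := hstep _ J' h2 Ideal.mul_le_left (by
        rw [h.mul_conj, Ideal.map_conjInt_map])
      rw [h2, idealClass_mul hA0 hJ0]
      refine H.mul_mem ?_ hJH
      rw [h.mul_conj]
      exact hH _ (by simpa using hP0)

end IsQuadConj

lemma eq_pow_of_sq_eq_one {G : Type*} [Group G] {c : G} {n : ℕ} (hn : Odd n) (hc : c ^ 2 = 1) :
    c ^ n = c := by
  obtain ⟨k, rfl⟩ := hn
  rw [pow_succ, pow_mul, hc, one_pow, one_mul]

lemma idealClass_pow_card_isPrincipal {R : Type*} [CommRing R] [IsDedekindDomain R]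
    {I : Ideal R} (hI : I ≠ ⊥) : (I ^ Nat.card (ClassGroup R)).IsPrincipal := by
  rw [← idealClass_eq_one (pow_ne_zero _ hI), idealClass_pow hI, pow_card_eq_one']

lemma idealClass_map_pow_card {L M : Type*} [Field L] [Field M] [Algebra L M] [NumberField L]
    [NumberField M] {J : Ideal (𝓞 L)} (hJ : J ≠ ⊥) :
    idealClass (J.map (algebraMap (𝓞 L) (𝓞 M))) ^ Nat.card (ClassGroup (𝓞 L)) = 1 := by
  obtain ⟨g, hg⟩ := idealClass_pow_card_isPrincipal hJ
  rw [← idealClass_pow (Ideal.map_algebraMap_ne_bot hJ), ← Ideal.map_pow, hg, Ideal.submodule_span_eq,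
    Ideal.map_span, Set.image_singleton, idealClass_span]

namespace IsQuadConj
variable {L M : Type*} [Field L] [NumberField L] [Field M] [NumberField M] [Algebra L M]
  {r : M} {d : L} {σ : M ≃ₐ[L] M}

omit [NumberField L] in
lemma hilbert90 (h : IsQuadConj r d σ) {δ : M} (hδ : δ * σ δ = 1) :
    ∃ x : 𝓞 M, x ≠ 0 ∧ (x : M) = δ * σ x := by
  have key : ∃ z : M, z ≠ 0 ∧ z = δ * σ z := by
    by_cases h1 : δ = -1
    · exact ⟨r, h.ne_zero, by rw [h1, h.map_gen]; ring⟩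
    · refine ⟨1 + δ, fun h2 => h1 (by linear_combination h2), ?_⟩
      rw [map_add, map_one]
      linear_combination -hδ
  obtain ⟨z, hz0, hz⟩ := key
  obtain ⟨n, hn, hint⟩ :=
    ((IsFractionRing.isAlgebraic_iff ℤ ℚ M).2
      (Algebra.IsAlgebraic.isAlgebraic (R := ℚ) z)).exists_integral_multiple
  obtain ⟨y, hy⟩ : ∃ y : 𝓞 M, (y : M) = n * z :=
    ⟨⟨n • z, hint⟩, by rw [← zsmul_eq_mul]; rfl⟩
  refine ⟨y, ?_, ?_⟩
  · rintro rfl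
    rw [RingOfIntegers.coe_eq_algebraMap, map_zero] at hy
    exact mul_ne_zero (Int.cast_ne_zero.2 hn) hz0 hy.symm
  · rw [hy, map_mul, map_intCast]
    linear_combination (n : M) * hz

lemma norm_div' {x y : M} (hy : y ≠ 0) :
    Algebra.norm L (x / y) = Algebra.norm L x / Algebra.norm L y := by
  rw [eq_div_iff (Algebra.norm_ne_zero_iff.2 hy), ← map_mul, div_mul_cancel₀ _ hy]

lemma exists_stable (h : IsQuadConj r d σ) (hodd : Odd (Nat.card (ClassGroup (𝓞 L))))
    (hU : ∀ (u : (𝓞 L)ˣ) (α : M), Algebra.norm L α = ((u : 𝓞 L) : L) →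
      ∃ v : (𝓞 M)ˣ, Algebra.norm L ((v : 𝓞 M) : M) = ((u : 𝓞 L) : L))
    {c : ClassGroup (𝓞 M)} (hc : c ^ 2 = 1) :
    ∃ I : Ideal (𝓞 M), I ≠ ⊥ ∧ I.map (conjInt σ) = I ∧ idealClass I = c := by
  obtain ⟨A, hA0, hAc⟩ := exists_idealClass_eq c
  set n := Nat.card (ClassGroup (𝓞 L))
  set a := A ^ n with ha
  have ha0 : a ≠ ⊥ := pow_ne_zero _ hA0
  have hac : idealClass a = c := by rw [ha, idealClass_pow hA0, hAc, eq_pow_of_sq_eq_one hodd hc]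
  set e := conjInt σ with he
  have hea0 : a.map e ≠ ⊥ := (Ideal.map_conjInt_eq_bot σ).not.2 ha0
  obtain ⟨g, hg⟩ : (Ideal.relNorm (𝓞 L) a).IsPrincipal := by
    rw [ha, map_pow]
    exact idealClass_pow_card_isPrincipal (by simpa using hA0)
  rw [Ideal.submodule_span_eq] at hg
  have hg0 : g ≠ 0 := by
    rintro rfl
    refine ha0 (Ideal.relNorm_eq_bot_iff (R := 𝓞 L).1 ?_)
    simpa using hg
  set g' := algebraMap (𝓞 L) (𝓞 M) g with hg'
  have hg'0 : g' ≠ 0 := by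
    rwa [hg', Ne, FaithfulSMul.algebraMap_eq_zero_iff]
  have h1 : a * a.map e = Ideal.span {g'} := by
    rw [h.mul_conj, hg, Ideal.map_span, Set.image_singleton]
  obtain ⟨β, hβ⟩ : (a * a).IsPrincipal := by
    rw [← idealClass_eq_one (mul_ne_zero ha0 ha0), idealClass_mul ha0 ha0, hac, ← sq, hc]
  rw [Ideal.submodule_span_eq] at hβ
  have hβ0 : β ≠ 0 := by
    rintro rfl
    exact mul_ne_zero ha0 ha0 (by simpa using hβ)
  have h2 : Ideal.span {β} * a.map e = Ideal.span {g'} * a := by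
    rw [← hβ, ← h1]; ring
  have h3 := congrArg (Ideal.relNorm (𝓞 L)) h2
  rw [map_mul, map_mul, Ideal.relNorm_map_algEquiv, Ideal.relNorm_singleton,
    Ideal.relNorm_singleton] at h3
  have h4 := mul_right_cancel₀ (by simpa using ha0) h3
  rw [Ideal.span_singleton_eq_span_singleton] at h4
  obtain ⟨u, hu⟩ := h4
  have hnorm : ∀ x : 𝓞 M, Algebra.norm L (x : M) = (Algebra.intNorm (𝓞 L) (𝓞 M) x : L) :=
    fun x => (Algebra.algebraMap_intNorm (A := 𝓞 L) (B := 𝓞 M) (K := L) (L := M) x).symm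
  have hβ0' : (β : M) ≠ 0 := by simpa using hβ0
  have hNβ : algebraMap (𝓞 L) L (Algebra.intNorm (𝓞 L) (𝓞 M) β) ≠ 0 := by
    rw [← RingOfIntegers.coe_eq_algebraMap, ← hnorm, Ne, Algebra.norm_eq_zero_iff]
    exact hβ0'
  obtain ⟨v, hv⟩ := hU u ((g' : M) / β) (by
    rw [norm_div' hβ0', hnorm, hnorm, ← hu, RingOfIntegers.coe_eq_algebraMap, map_mul,
      mul_div_cancel_left₀ _ hNβ])
  have hv0 : ((v : 𝓞 M) : M) ≠ 0 := by simp
  obtain ⟨x, hx0, hx⟩ := h.hilbert90 (δ := (g' : M) / β / ((v : 𝓞 M) : M)) (by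
    rw [← h.norm_eq, norm_div' hv0, hv, norm_div' hβ0', hnorm, hnorm, ← hu,
      RingOfIntegers.coe_eq_algebraMap (_ * _), map_mul]
    have : ((u : 𝓞 L) : L) ≠ 0 := by simp
    rw [mul_div_cancel_left₀ _ hNβ, div_self this, map_one])
  have h5 : β * v * x = g' * e x := by
    apply RingOfIntegers.ext
    change (β : M) * ((v : 𝓞 M) : M) * (x : M) = (g' : M) * σ x
    nth_rewrite 1 [hx]
    field_simp
  have hx0' : Ideal.span {x} ≠ ⊥ := by simpa using hx0
  refine ⟨Ideal.span {x} * a, mul_ne_zero hx0' ha0, ?_, ?_⟩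
  · rw [Ideal.map_conjInt_mul, Ideal.map_conjInt_span]
    have hβs : Ideal.span {β} ≠ (0 : Ideal (𝓞 M)) := by simpa using hβ0
    apply mul_left_cancel₀ hβs
    calc Ideal.span {β} * (Ideal.span {e x} * a.map e)
        = Ideal.span {e x} * (Ideal.span {β} * a.map e) := by ring
      _ = Ideal.span {g' * e x} * a := by rw [h2, ← Ideal.span_singleton_mul_span_singleton]; ring
      _ = Ideal.span {β * x * v} * a := by rw [← h5]; congr 3; ring
      _ = _ := by
        rw [Ideal.span_singleton_mul_right_unit v.isUnit,
          ← Ideal.span_singleton_mul_span_singleton, mul_assoc]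
  · rw [idealClass_mul hx0' ha0, idealClass_span, one_mul, hac]

/-- Odd class numbers propagate along quadratic extensions in which the stable primes that may
ramify are principal. -/
lemma odd_card_classGroup (h : IsQuadConj r d σ) (hodd : Odd (Nat.card (ClassGroup (𝓞 L))))
    (hU : ∀ (u : (𝓞 L)ˣ) (α : M), Algebra.norm L α = ((u : 𝓞 L) : L) →
      ∃ v : (𝓞 M)ˣ, Algebra.norm L ((v : 𝓞 M) : M) = ((u : 𝓞 L) : L))
    (hP : ∀ P : Ideal (𝓞 M), P.IsPrime → P ≠ ⊥ → P.map (conjInt σ) = P →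
      (∀ x, x - conjInt σ x ∈ P) → P.IsPrincipal) : Odd (Nat.card (ClassGroup (𝓞 M))) := by
  by_contra hev
  rw [Nat.not_odd_iff_even, even_iff_two_dvd] at hev
  obtain ⟨c, hc⟩ := exists_prime_orderOf_dvd_card' 2 hev
  have hc2 : c ^ 2 = 1 := hc ▸ pow_orderOf_eq_one c
  obtain ⟨I, hI0, hIs, rfl⟩ := h.exists_stable hodd hU hc2
  have hmem := h.idealClass_mem_of_stable
    (powMonoidHom (Nat.card (ClassGroup (𝓞 L))) : ClassGroup (𝓞 M) →* _).ker
    (fun J hJ => idealClass_map_pow_card hJ) hI0 hIs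
    (fun P h1 h2 _ h3 h4 => by
      rw [(idealClass_eq_one h2).2 (hP P h1 h2 h3 h4)]; exact Subgroup.one_mem _)
  rw [MonoidHom.mem_ker, powMonoidHom_apply, eq_pow_of_sq_eq_one hodd hc2] at hmem
  rw [hmem, orderOf_one] at hc
  norm_num at hc

end IsQuadConj

section units
variable {K : Type*} [Field K] [NumberField K]

lemma exists_eq_sq_or_neg_sq_of_torsion (h1 : ¬ IsSquare (-1 : K)) {u : (𝓞 K)ˣ}
    (hu : u ∈ NumberField.Units.torsion K) : ∃ v : (𝓞 K)ˣ, u = v ^ 2 ∨ u = -v ^ 2 := by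
  obtain ⟨g, hg⟩ := IsCyclic.exists_generator (α := NumberField.Units.torsion K)
  have hneg : (-1 : (𝓞 K)ˣ) ∈ NumberField.Units.torsion K :=
    (CommGroup.mem_torsion _).2 (isOfFinOrder_iff_pow_eq_one.2 ⟨2, two_pos, by simp⟩)
  obtain ⟨k, hk⟩ := hg ⟨u, hu⟩
  obtain ⟨m, hm⟩ := hg ⟨-1, hneg⟩
  replace hk : (g : (𝓞 K)ˣ) ^ k = u := congrArg Subtype.val hk
  replace hm : (g : (𝓞 K)ˣ) ^ m = -1 := congrArg Subtype.val hm
  have hmo : Odd m := by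
    by_contra hme
    obtain ⟨n, rfl⟩ := Int.not_odd_iff_even.1 hme
    refine h1 ⟨(((g : (𝓞 K)ˣ) ^ n : (𝓞 K)ˣ) : 𝓞 K), ?_⟩
    rw [zpow_add] at hm
    have h2 := congrArg (fun z : (𝓞 K)ˣ => algebraMap (𝓞 K) K z) hm
    simp only [Units.val_mul, map_mul, Units.val_neg, Units.val_one, map_neg, map_one] at h2
    exact h2.symm
  rcases Int.even_or_odd k with ⟨n, rfl⟩ | hko
  · exact ⟨(g : (𝓞 K)ˣ) ^ n, Or.inl (by rw [← hk, zpow_add, sq])⟩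
  · obtain ⟨n, hn⟩ := hko.add_odd hmo
    refine ⟨(g : (𝓞 K)ˣ) ^ n, Or.inr ?_⟩
    rw [sq, ← zpow_add, ← hn, zpow_add, hk, hm]
    simp

lemma exists_eq_sq_or_neg_sq (hr : NumberField.Units.rank K = 0) (h1 : ¬ IsSquare (-1 : K))
    (u : (𝓞 K)ˣ) : ∃ v : (𝓞 K)ˣ, u = v ^ 2 ∨ u = -v ^ 2 := by
  obtain ⟨⟨ζ, e⟩, h, -⟩ := NumberField.Units.exist_unique_eq_mul_prod K u
  have : IsEmpty (Fin (NumberField.Units.rank K)) := by rw [hr]; infer_instance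
  simp only [Finset.univ_eq_empty, Finset.prod_empty, mul_one] at h
  exact exists_eq_sq_or_neg_sq_of_torsion h1 (h ▸ ζ.2)

lemma exists_eq_mul_sq (hr : NumberField.Units.rank K = 1) (h1 : ¬ IsSquare (-1 : K))
    (η : (𝓞 K)ˣ) (hη : ¬ IsSquare ((η : 𝓞 K) : K)) (hη' : ¬ IsSquare (-((η : 𝓞 K) : K)))
    (u : (𝓞 K)ˣ) : ∃ v : (𝓞 K)ˣ, u = v ^ 2 ∨ u = -v ^ 2 ∨ u = η * v ^ 2 ∨ u = -(η * v ^ 2) := by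
  have : Unique (Fin (NumberField.Units.rank K)) := by rw [hr]; infer_instance
  set f := NumberField.Units.fundSystem K default with hf
  have key : ∀ u : (𝓞 K)ˣ, ∃ v : (𝓞 K)ˣ,
      u = v ^ 2 ∨ u = -v ^ 2 ∨ u = f * v ^ 2 ∨ u = -(f * v ^ 2) := by
    intro u
    obtain ⟨⟨ζ, e⟩, h, -⟩ := NumberField.Units.exist_unique_eq_mul_prod K u
    simp only [Fintype.prod_unique] at h
    rw [← hf] at h
    obtain ⟨v, hv⟩ := exists_eq_sq_or_neg_sq_of_torsion h1 ζ.2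
    rcases Int.even_or_odd' (e default) with ⟨n, hn | hn⟩
    · refine ⟨v * f ^ n, ?_⟩
      rw [h, hn, two_mul, zpow_add]
      rcases hv with hv | hv <;> rw [hv]
      · exact Or.inl (by rw [mul_pow, sq (f ^ n)])
      · exact Or.inr (Or.inl (by rw [mul_pow, neg_mul, sq (f ^ n)]))
    · refine ⟨v * f ^ n, Or.inr (Or.inr ?_)⟩
      rw [h, hn, two_mul, zpow_add, zpow_add, zpow_one]
      rcases hv with hv | hv <;> rw [hv]
      · exact Or.inl (by rw [mul_pow, sq (f ^ n)]; ac_rfl)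
      · exact Or.inr (by rw [mul_pow, neg_mul, sq (f ^ n)]; congr 1; ac_rfl)
  have cast : ∀ v : (𝓞 K)ˣ, (((v ^ 2 : (𝓞 K)ˣ) : 𝓞 K) : K) = ((v : 𝓞 K) : K) * ((v : 𝓞 K) : K) := by
    intro v
    rw [sq, Units.val_mul]
    exact map_mul (algebraMap (𝓞 K) K) _ _
  have hneg : ∀ v : (𝓞 K)ˣ, (((-v : (𝓞 K)ˣ) : 𝓞 K) : K) = -((v : 𝓞 K) : K) := fun v =>
    map_neg (algebraMap (𝓞 K) K) _
  obtain ⟨w, hw | hw | hw | hw⟩ := key η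
  · exact absurd ⟨_, by rw [hw, cast]⟩ hη
  · exact absurd ⟨_, by rw [hw, hneg, neg_neg, cast]⟩ hη'
  · have hf' : f = η * (w⁻¹) ^ 2 := by rw [hw]; group
    obtain ⟨v, hv⟩ := key u
    rw [hf'] at hv
    rcases hv with hv | hv | hv | hv
    · exact ⟨v, Or.inl hv⟩
    · exact ⟨v, Or.inr (Or.inl hv)⟩
    · exact ⟨w⁻¹ * v, Or.inr (Or.inr (Or.inl (by rw [hv, mul_pow, mul_assoc])))⟩
    · exact ⟨w⁻¹ * v, Or.inr (Or.inr (Or.inr (by rw [hv, mul_pow, mul_assoc])))⟩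
  · have hf' : f = -(η * (w⁻¹) ^ 2) := by rw [hw, neg_mul, neg_neg]; group
    obtain ⟨v, hv⟩ := key u
    rw [hf'] at hv
    rcases hv with hv | hv | hv | hv
    · exact ⟨v, Or.inl hv⟩
    · exact ⟨v, Or.inr (Or.inl hv)⟩
    · exact ⟨w⁻¹ * v, Or.inr (Or.inr (Or.inr (by rw [hv, mul_pow, neg_mul, mul_assoc])))⟩
    · exact ⟨w⁻¹ * v, Or.inr (Or.inr (Or.inl (by rw [hv, mul_pow, neg_mul, mul_assoc, neg_neg])))⟩

/-- A square root of a negative rational makes a number field totally complex. -/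
lemma isTotallyComplex_of_sq {x : K} {d : ℚ} (hd : d < 0) (hx : x ^ 2 = algebraMap ℚ K d) :
    IsTotallyComplex K where
  isComplex v := by
    by_contra hv
    rw [InfinitePlace.not_isComplex_iff_isReal] at hv
    have h1 := congrArg (InfinitePlace.embedding_of_isReal hv) hx
    rw [map_pow, eq_ratCast, map_ratCast] at h1
    have h2 : (d : ℝ) < 0 := by exact_mod_cast hd
    nlinarith [sq_nonneg (InfinitePlace.embedding_of_isReal hv x)]

lemma rank_eq_of_isTotallyComplex [IsTotallyComplex K] {n : ℕ} (h : Module.finrank ℚ K = 2 * n) :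
    NumberField.Units.rank K = n - 1 := by
  rw [NumberField.Units.rank, InfinitePlace.card_eq_nrRealPlaces_add_nrComplexPlaces,
    IsTotallyComplex.nrRealPlaces_eq_zero, zero_add]
  have := IsTotallyComplex.finrank K
  omega

end units

section residue
variable {M : Type*} [Field M] [NumberField M]

lemma exists_absNorm_eq_pow {P : Ideal (𝓞 M)} (hP : P.IsPrime) {ℓ : ℕ} (hℓ : ℓ.Prime)
    (h : (ℓ : 𝓞 M) ∈ P) : ∃ n ≠ 0, Ideal.absNorm P = ℓ ^ n := by
  have h1 := Ideal.absNorm_dvd_absNorm_of_le ((Ideal.span_singleton_le_iff_mem (I := P)).2 h)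
  rw [Ideal.absNorm_span_natCast, Nat.dvd_prime_pow hℓ] at h1
  obtain ⟨n, -, hn⟩ := h1
  refine ⟨n, ?_, hn⟩
  rintro rfl
  exact hP.ne_top (Ideal.absNorm_eq_one_iff.1 (by simpa using hn))

lemma sq_dvd_absNorm {P : Ideal (𝓞 M)} (hP : P.IsPrime) {ℓ : ℕ} [Fact ℓ.Prime]
    (h : (ℓ : 𝓞 M) ∈ P) {x : 𝓞 M} {n : ℤ} (hx : x ^ 2 = n) (hn : legendreSym ℓ n = -1) :
    ℓ ^ 2 ∣ Ideal.absNorm P := by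
  have hℓ : ℓ.Prime := Fact.out
  obtain ⟨m, hm0, hm⟩ := exists_absNorm_eq_pow hP hℓ h
  rw [hm]
  refine pow_dvd_pow _ ?_
  by_contra hlt
  obtain rfl : m = 1 := by omega
  rw [pow_one, Ideal.absNorm_apply, Submodule.cardQuot_apply] at hm
  have : Finite (𝓞 M ⧸ P) := Nat.finite_of_card_ne_zero (hm ▸ hℓ.ne_zero)
  have := Fintype.ofFinite (𝓞 M ⧸ P)
  rw [Nat.card_eq_fintype_card] at hm
  let e := ZMod.ringEquivOfPrime (𝓞 M ⧸ P) hℓ hm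
  refine (legendreSym.eq_neg_one_iff ℓ).1 hn ⟨e.symm (Ideal.Quotient.mk P x), ?_⟩
  rw [← sq, ← map_pow, ← map_pow, hx, map_intCast, map_intCast]

lemma Ideal.eq_of_le_of_absNorm_dvd {J P : Ideal (𝓞 M)} (hJ : J ≠ ⊥) (h : J ≤ P)
    (hn : Ideal.absNorm J ∣ Ideal.absNorm P) : J = P := by
  obtain ⟨Q, rfl⟩ := Ideal.dvd_iff_le.2 h
  rw [map_mul] at hn
  have hJ' := mt Ideal.absNorm_eq_zero_iff.1 hJ
  rw [map_mul] at hJ'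
  have h1 : Ideal.absNorm Q = 1 := by
    obtain ⟨c, hc⟩ := hn
    have h2 : absNorm P * (absNorm Q * c) = absNorm P * 1 := by rw [← mul_assoc, ← hc, mul_one]
    exact Nat.eq_one_of_mul_eq_one_right (Nat.eq_of_mul_eq_mul_left (Nat.pos_of_ne_zero
      (left_ne_zero_of_mul hJ')) h2)
  rw [Ideal.absNorm_eq_one_iff.1 h1, Ideal.mul_top]

lemma absNorm_span_of_sq {x : 𝓞 M} {c : ℤ} (hx : x ^ 2 = c) {n : ℕ}
    (hn : Module.finrank ℚ M = 2 * n) : Ideal.absNorm (Ideal.span {x}) = c.natAbs ^ n := by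
  have h1 : Ideal.absNorm (Ideal.span {x}) ^ 2 = (c.natAbs ^ n) ^ 2 := by
    rw [← map_pow, Ideal.span_singleton_pow, hx, Ideal.absNorm_span_singleton,
      ← eq_intCast (algebraMap ℤ (𝓞 M)), Algebra.norm_algebraMap, RingOfIntegers.rank, hn,
      Int.natAbs_pow, ← pow_mul, mul_comm]
  exact Nat.pow_left_injective two_ne_zero h1

omit [NumberField M] in
lemma exists_coe_eq {x : M} (hx : IsIntegral ℤ x) : ∃ y : 𝓞 M, algebraMap (𝓞 M) M y = x :=
  ⟨⟨x, hx⟩, rfl⟩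

omit [NumberField M] in
lemma exists_coe_eq_of_sq {x : M} {c : ℤ} (hx : x ^ 2 = c) :
    ∃ y : 𝓞 M, algebraMap (𝓞 M) M y = x ∧ y ^ 2 = c := by
  obtain ⟨y, rfl⟩ := exists_coe_eq (x := x) (.of_pow two_pos (by
    rw [hx]; exact isIntegral_algebraMap))
  exact ⟨y, rfl, FaithfulSMul.algebraMap_injective (𝓞 M) M (by rw [map_pow, map_intCast, ← hx])⟩

/-- The element `(1 + t) / 2` for `t ^ 2 = -q` with `q ≡ 3 (mod 4)`. -/
lemma exists_half {t : 𝓞 M} {q : ℕ} (hq : q % 4 = 3) (ht : t ^ 2 = -(q : 𝓞 M)) :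
    ∃ o : 𝓞 M, 2 * o = 1 + t := by
  have hint : IsIntegral ℤ ((1 + (t : M)) / 2) := by
    have ht' : (t : M) ^ 2 = -(q : M) := by
      have := congrArg (algebraMap (𝓞 M) M) ht
      simpa using this
    refine ⟨Polynomial.X ^ 2 - Polynomial.X + Polynomial.C (((q + 1) / 4 : ℕ) : ℤ), ?_, ?_⟩
    · monicity!
    · obtain ⟨m, hm⟩ : 4 ∣ q + 1 := by omega
      have hm' : (q : M) + 1 = 4 * m := by exact_mod_cast congrArg (Nat.cast : ℕ → M) hm
      rw [hm, Nat.mul_div_cancel_left _ (by norm_num)]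
      simp
      linear_combination (1 / 4 : M) * ht' - (1 / 4) * hm'
  obtain ⟨o, ho⟩ := exists_coe_eq hint
  refine ⟨o, FaithfulSMul.algebraMap_injective (𝓞 M) M ?_⟩
  rw [map_mul, map_add, map_one, map_ofNat, ho]
  ring

end residue

lemma not_isSquare_neg_one_rat : ¬ IsSquare (-1 : ℚ) := by
  rintro ⟨x, hx⟩
  nlinarith [mul_self_nonneg x]

namespace IsQuadConj
variable {L M : Type*} [Field L] [NumberField L] [Field M] [NumberField M] [Algebra L M]
  {r : M} {d : L} {σ : M ≃ₐ[L] M}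

lemma norm_algebraMap_unit (h : IsQuadConj r d σ) (v : (𝓞 L)ˣ) :
    Algebra.norm L (((Units.map (algebraMap (𝓞 L) (𝓞 M)).toMonoidHom v : (𝓞 M)ˣ) : 𝓞 M) : M) =
      ((v : 𝓞 L) : L) ^ 2 := by
  rw [← h.finrank_eq, ← Algebra.norm_algebraMap]
  rfl

lemma exists_unit_norm (h : IsQuadConj r d σ)
    (hL : ∀ u : (𝓞 L)ˣ, ∃ v : (𝓞 L)ˣ, u = v ^ 2 ∨ u = -v ^ 2)
    (hneg : ∀ α : M, Algebra.norm L α = -1 → ∃ ε : (𝓞 M)ˣ, Algebra.norm L ((ε : 𝓞 M) : M) = -1)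
    (u : (𝓞 L)ˣ) (α : M) (hα : Algebra.norm L α = ((u : 𝓞 L) : L)) :
    ∃ v : (𝓞 M)ˣ, Algebra.norm L ((v : 𝓞 M) : M) = ((u : 𝓞 L) : L) := by
  obtain ⟨v, rfl | rfl⟩ := hL u
  · refine ⟨Units.map (algebraMap (𝓞 L) (𝓞 M)).toMonoidHom v, ?_⟩
    rw [h.norm_algebraMap_unit]
    simp
  · set v' := Units.map (algebraMap (𝓞 L) (𝓞 M)).toMonoidHom v
    have hv' := h.norm_algebraMap_unit v
    have hv : ((v : 𝓞 L) : L) ≠ 0 := by simp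
    have hcoe : (((-v ^ 2 : (𝓞 L)ˣ) : 𝓞 L) : L) = -((v : 𝓞 L) : L) ^ 2 := by simp
    rw [hcoe] at hα ⊢
    obtain ⟨ε, hε⟩ := hneg (α / ((v' : 𝓞 M) : M)) (by
      rw [norm_div' (by simp), hv', hα, neg_div, div_self (pow_ne_zero 2 hv)])
    refine ⟨ε * v', ?_⟩
    rw [Units.val_mul, RingOfIntegers.coe_eq_algebraMap, map_mul, map_mul]
    rw [hε, hv']
    ring

/-- The class number of `ℚ(√-ℓ)` is odd for `ℓ = 2` and for primes `ℓ ≡ 3 (mod 4)`. -/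
lemma odd_card_classGroup_of_prime {x : M} {ℓ : ℕ} (hℓ : ℓ.Prime) (hℓ' : ℓ = 2 ∨ ℓ % 4 = 3)
    {σ : M ≃ₐ[ℚ] M} (h : IsQuadConj x (-ℓ : ℚ) σ) : Odd (Nat.card (ClassGroup (𝓞 M))) := by
  obtain ⟨y, rfl, hy⟩ := exists_coe_eq_of_sq (x := x) (c := -ℓ) (by simpa using h.sq)
  have hℓ0 : (0 : ℚ) < ℓ := by exact_mod_cast hℓ.pos
  have hσ : conjInt σ y = -y := RingOfIntegers.ext (by
    rw [coe_conjInt]; exact h.map_gen.trans (map_neg (algebraMap (𝓞 M) M) y).symm)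
  refine h.odd_card_classGroup ?_ (h.exists_unit_norm (exists_eq_sq_or_neg_sq ?_
    not_isSquare_neg_one_rat) ?_) ?_
  · rw [show Nat.card (ClassGroup (𝓞 ℚ)) = 1 by
      rw [Nat.card_eq_fintype_card]; exact Rat.classNumber_eq]
    exact odd_one
  · rw [NumberField.Units.rank, Fintype.card_eq_one_iff_nonempty_unique.2
      ⟨inferInstance⟩]
  · intro α hα
    obtain ⟨X, Y, rfl⟩ := h.span α
    rw [h.norm_add_mul] at hα
    nlinarith [sq_nonneg X, mul_nonneg hℓ0.le (sq_nonneg Y)]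
  · intro P hP hP0 _ hin
    have hyP : y ∈ P := by
      rcases hℓ' with rfl | hℓ'
      · have h1 := hin y
        rw [hσ, sub_neg_eq_add, ← two_mul] at h1
        rcases hP.mem_or_mem h1 with h2 | h2
        · refine hP.mem_of_pow_mem 2 ?_
          rw [hy]
          simpa using h2
        · exact h2
      · obtain ⟨o, ho⟩ := exists_half hℓ' (by simpa using hy)
        have h2 : 2 * conjInt σ o = 1 - y := by
          have := congrArg (conjInt σ) ho
          rw [map_mul, map_add, map_one, map_ofNat, hσ] at this
          rw [this, sub_eq_add_neg]
        have h3 : (2 : 𝓞 M) * (o - conjInt σ o) = 2 * y := by linear_combination ho - h2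
        rw [← mul_left_cancel₀ two_ne_zero h3]
        exact hin o
    have hJ : Ideal.span {y} ≠ ⊥ := by
      have := h.ne_zero
      rw [Ne, Ideal.span_singleton_eq_bot]
      rintro rfl
      exact this (map_zero _)
    have hle : Ideal.span {y} ≤ P := (Ideal.span_singleton_le_iff_mem _).2 hyP
    have hJn : Ideal.absNorm (Ideal.span {y}) = ℓ := by
      rw [absNorm_span_of_sq hy (n := 1) (by rw [h.finrank_eq])]
      simp
    have hPn : Ideal.absNorm P ∣ ℓ := hJn ▸ Ideal.absNorm_dvd_absNorm_of_le hle
    rw [← Ideal.eq_of_le_of_absNorm_dvd hJ hle]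
    · exact ⟨⟨y, rfl⟩⟩
    · rcases (Nat.dvd_prime hℓ).1 hPn with h1 | h1
      · exact absurd (Ideal.absNorm_eq_one_iff.1 h1) hP.ne_top
      · rw [hJn, h1]

/-- The class number of `ℚ(√-2, √-q)` is odd for primes `q ≡ 7 (mod 8)`. -/
lemma odd_card_classGroup_biquadratic {s : L} {t : M} {q : ℕ} (hq : q.Prime) (hq8 : q % 8 = 7)
    {τ : L ≃ₐ[ℚ] L} (hs : IsQuadConj s (-2 : ℚ) τ) {σ : M ≃ₐ[L] M}
    (ht : IsQuadConj t (-q : L) σ) : Odd (Nat.card (ClassGroup (𝓞 M))) := by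
  have hqF : Fact q.Prime := ⟨hq⟩
  have hodd : Odd (Nat.card (ClassGroup (𝓞 L))) :=
    odd_card_classGroup_of_prime Nat.prime_two (Or.inl rfl) (x := s) (σ := τ) (by simpa using hs)
  obtain ⟨s, rfl, hs2⟩ := exists_coe_eq_of_sq (x := s) (c := -2) (by simpa using hs.sq)
  obtain ⟨t, rfl, ht2⟩ := exists_coe_eq_of_sq (x := t) (c := -q) (by simpa using ht.sq)
  have := isTotallyComplex_of_sq (x := algebraMap (𝓞 L) L s) (d := -2) (by norm_num) (by simpa using hs.sq)
  have hσ : conjInt σ t = -t := RingOfIntegers.ext (by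
    rw [coe_conjInt]; exact ht.map_gen.trans (map_neg (algebraMap (𝓞 M) M) t).symm)
  refine ht.odd_card_classGroup hodd (ht.exists_unit_norm (exists_eq_sq_or_neg_sq ?_ ?_) ?_) ?_
  · rw [rank_eq_of_isTotallyComplex (n := 1) (by rw [hs.finrank_eq])]
  · intro h
    have := hs.isSquare_of (c := -1) (by simpa using h)
    rcases this with h1 | ⟨x, hx⟩
    · exact not_isSquare_neg_one_rat h1
    · have h2 : IsSquare ((2 : ℕ) : ℚ) := ⟨x, by push_cast; linarith⟩
      rw [Rat.isSquare_natCast_iff] at h2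
      exact Nat.prime_two.not_isSquare h2
  · intro α hα
    obtain ⟨x, y, hxy⟩ := exists_norm_two hq hq8
    have hxy' : 2 * (x : 𝓞 M) ^ 2 - q * (y : 𝓞 M) ^ 2 = 1 := by
      have h1 : 2 * x ^ 2 - q * y ^ 2 = 1 := by linarith
      exact_mod_cast congrArg (Int.cast : ℤ → 𝓞 M) h1
    have hS2 : algebraMap (𝓞 L) (𝓞 M) s ^ 2 = -2 := by
      rw [← map_pow, hs2, map_intCast]; norm_num
    have ht2' : t ^ 2 = -(q : 𝓞 M) := by rw [ht2]; simp
    have hunit : (y * t - x * algebraMap (𝓞 L) (𝓞 M) s) * (y * t + x * algebraMap (𝓞 L) (𝓞 M) s)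
        = 1 := by
      linear_combination (y : 𝓞 M) ^ 2 * ht2' - (x : 𝓞 M) ^ 2 * hS2 + hxy'
    refine ⟨⟨_, _, hunit, by rw [mul_comm]; exact hunit⟩, ?_⟩
    apply (algebraMap L M).injective
    rw [ht.norm_eq, ← coe_conjInt]
    simp only [map_sub, map_mul, map_intCast, hσ, AlgEquiv.commutes]
    have h2 := congrArg (algebraMap (𝓞 M) M) hunit
    simp only [map_sub, map_mul, map_intCast, map_add, map_one, map_neg] at h2 ⊢
    linear_combination -h2
  · intro P hP hP0 _ hin
    have htP : t ∈ P := by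
      obtain ⟨o, ho⟩ := exists_half (q := q) (by omega) (by simpa using ht2)
      have h2 : 2 * conjInt σ o = 1 - t := by
        have := congrArg (conjInt σ) ho
        rw [map_mul, map_add, map_one, map_ofNat, hσ] at this
        rw [this, sub_eq_add_neg]
      have h3 : (2 : 𝓞 M) * (o - conjInt σ o) = 2 * t := by linear_combination ho - h2
      rw [← mul_left_cancel₀ two_ne_zero h3]
      exact hin o
    have hqP : (q : 𝓞 M) ∈ P := by
      have h1 := P.neg_mem (P.pow_mem_of_mem htP 2 two_pos)
      rw [ht2] at h1
      simpa using h1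
    have hJ : Ideal.span {t} ≠ ⊥ := by
      have := ht.ne_zero
      rw [Ne, Ideal.span_singleton_eq_bot]
      rintro rfl
      exact this (map_zero _)
    have hle : Ideal.span {t} ≤ P := (Ideal.span_singleton_le_iff_mem _).2 htP
    have hJn : Ideal.absNorm (Ideal.span {t}) = q ^ 2 := by
      rw [absNorm_span_of_sq ht2 (n := 2) (by
        rw [← Module.finrank_mul_finrank ℚ L M, hs.finrank_eq, ht.finrank_eq])]
      simp
    rw [← Ideal.eq_of_le_of_absNorm_dvd hJ hle]
    · exact ⟨⟨t, rfl⟩⟩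
    · rw [hJn]
      refine sq_dvd_absNorm hP hqP (x := algebraMap (𝓞 L) (𝓞 M) s) (n := -2) ?_
        (legendreSym_two_eq' hq8).2.1
      rw [← map_pow, hs2, map_intCast]

end IsQuadConj

/-- The field `F = ℚ(√-2, √-q, √-p)` with its subfields `L = ℚ(√-2, √-q)` and `K = ℚ(√-q)`,
and the automorphisms changing the signs of `√-p`, of `√-2`, of `√-q`, and of both
`√-2` and `√-q`. -/
structure IsTriquad (p q : ℕ) {L K F : Type*} [Field L] [NumberField L] [Field K] [NumberField K]
    [Field F] [NumberField F] [Algebra L F] [Algebra K F] (s t r : 𝓞 F) (σ : F ≃ₐ[L] F)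
    (ρ : F ≃ₐ[K] F) (ς τ : F ≃ₐ[ℚ] F) : Prop where
  p_prime : p.Prime
  q_prime : q.Prime
  p_mod : p % 8 = 5
  q_mod : q % 8 = 7
  symbol : jacobiSym p q = -1
  s_sq : s ^ 2 = -2
  t_sq : t ^ 2 = -(q : 𝓞 F)
  r_sq : r ^ 2 = -(p : 𝓞 F)
  s_mem : ∃ a : 𝓞 L, algebraMap (𝓞 L) (𝓞 F) a = s
  t_mem : ∃ a : 𝓞 L, algebraMap (𝓞 L) (𝓞 F) a = t
  conj : IsQuadConj (r : F) (-p : L) σ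
  ρ_s : conjInt ρ s = -s
  ρ_t : conjInt ρ t = t
  ρ_r : conjInt ρ r = r
  ς_s : conjInt ς s = s
  ς_t : conjInt ς t = -t
  ς_r : conjInt ς r = r
  τ_s : conjInt τ s = -s
  τ_t : conjInt τ t = -t
  τ_r : conjInt τ r = r
  τ_τ : ∀ z, τ (τ z) = z
  σ_τ : ∀ z, σ (τ z) = τ (σ z)
  fixed : ∀ z, σ z = z → τ z = z → z ∈ ℚ⟮(s * t : F)⟯
  odd_L : Odd (Nat.card (ClassGroup (𝓞 L)))
  rank_L : NumberField.Units.rank L = 1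
  odd_K : Odd (Nat.card (ClassGroup (𝓞 K)))
  rank_K : NumberField.Units.rank K = 0
  hom_K : Nonempty (K →+* ℚ_[2])
  neg_one : ¬ IsSquare (-1 : F)
  s_notMem : (s : F) ∉ Set.range (algebraMap K F)
  r_notMem : (r : F) ∉ Set.range (algebraMap K F)
  finrank : Module.finrank ℚ F = 8
  finrank_K : Module.finrank K F = 4

namespace IsTriquad
variable {p q : ℕ} {L K F : Type*} [Field L] [NumberField L] [Field K] [NumberField K]
    [Field F] [NumberField F] [Algebra L F] [Algebra K F] {s t r : 𝓞 F} {σ : F ≃ₐ[L] F}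
    {ρ : F ≃ₐ[K] F} {ς τ : F ≃ₐ[ℚ] F}

section basic
variable (h : IsTriquad p q s t r σ ρ ς τ)
include h

lemma fact_p : Fact p.Prime := ⟨h.p_prime⟩

lemma fact_q : Fact q.Prime := ⟨h.q_prime⟩

lemma σ_s : conjInt σ s = s := by
  obtain ⟨a, rfl⟩ := h.s_mem
  exact AlgEquiv.commutes _ a

lemma σ_t : conjInt σ t = t := by
  obtain ⟨a, rfl⟩ := h.t_mem
  exact AlgEquiv.commutes _ a

lemma σ_r : conjInt σ r = -r := RingOfIntegers.ext (by
  rw [coe_conjInt]; exact h.conj.map_gen.trans (map_neg (algebraMap (𝓞 F) F) r).symm)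

lemma s_ne_zero : s ≠ 0 := by
  rintro rfl
  have := h.s_sq
  norm_num at this

lemma r_ne_zero : r ≠ 0 := by
  rintro rfl
  have := h.r_sq
  have hp := h.p_prime.ne_zero
  simp at this
  exact hp this

lemma neg_one_L : ¬ IsSquare (-1 : L) := fun ⟨x, hx⟩ =>
  h.neg_one ⟨algebraMap L F x, by rw [← map_mul, ← hx, map_neg, map_one]⟩

lemma neg_one_K : ¬ IsSquare (-1 : K) := fun ⟨x, hx⟩ =>
  h.neg_one ⟨algebraMap K F x, by rw [← map_mul, ← hx, map_neg, map_one]⟩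

lemma exists_unit : ∃ (η : (𝓞 L)ˣ) (x y : ℤ), 2 * x ^ 2 - q * y ^ 2 = 1 ∧
    algebraMap (𝓞 L) (𝓞 F) η = y * t - x * s := by
  obtain ⟨x, y, hxy⟩ := exists_norm_two h.q_prime h.q_mod
  have h1 : 2 * x ^ 2 - q * y ^ 2 = 1 := by linarith
  have hxy' : 2 * (x : 𝓞 F) ^ 2 - q * (y : 𝓞 F) ^ 2 = 1 := by
    exact_mod_cast congrArg (Int.cast : ℤ → 𝓞 F) h1
  obtain ⟨a, ha⟩ := h.s_mem
  obtain ⟨b, hb⟩ := h.t_mem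
  have hunit : (y * b - x * a) * (y * b + x * a) = 1 := by
    apply FaithfulSMul.algebraMap_injective (𝓞 L) (𝓞 F)
    simp only [map_mul, map_sub, map_add, map_intCast, map_one, ha, hb]
    linear_combination (y : 𝓞 F) ^ 2 * h.t_sq - (x : 𝓞 F) ^ 2 * h.s_sq + hxy'
  exact ⟨⟨_, _, hunit, by rw [mul_comm]; exact hunit⟩, x, y, h1,
    by simp only [map_mul, map_sub, map_intCast, ha, hb]⟩

lemma not_isSquare_of {z : L} (hz : algebraMap L F z * ς (algebraMap L F z) = -1) :
    ¬ IsSquare z := by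
  rintro ⟨x, rfl⟩
  refine h.neg_one ⟨algebraMap L F x * ς (algebraMap L F x), ?_⟩
  rw [← hz, map_mul, map_mul]
  ring

lemma norm_unit {η : (𝓞 L)ˣ} {x y : ℤ} (hxy : 2 * x ^ 2 - q * y ^ 2 = 1)
    (hη : algebraMap (𝓞 L) (𝓞 F) η = y * t - x * s) :
    algebraMap L F ((η : 𝓞 L) : L) * ς (algebraMap L F ((η : 𝓞 L) : L)) = -1 := by
  have hxy' : 2 * (x : 𝓞 F) ^ 2 - q * (y : 𝓞 F) ^ 2 = 1 := by
    exact_mod_cast congrArg (Int.cast : ℤ → 𝓞 F) hxy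
  have h1 : algebraMap (𝓞 L) (𝓞 F) η * conjInt ς (algebraMap (𝓞 L) (𝓞 F) η) = -1 := by
    rw [hη]
    simp only [map_sub, map_mul, map_intCast, h.ς_s, h.ς_t]
    linear_combination -(y : 𝓞 F) ^ 2 * h.t_sq + (x : 𝓞 F) ^ 2 * h.s_sq - hxy'
  have h2 := congrArg (algebraMap (𝓞 F) F) h1
  rw [map_mul, map_neg, map_one] at h2
  exact h2

end basic
end IsTriquad

namespace IsTriquad
variable {p q : ℕ} {L K F : Type*} [Field L] [NumberField L] [Field K] [NumberField K]
    [Field F] [NumberField F] [Algebra L F] [Algebra K F] {s t r : 𝓞 F} {σ : F ≃ₐ[L] F}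
    {ρ : F ≃ₐ[K] F} {ς τ : F ≃ₐ[ℚ] F}

section units
variable (h : IsTriquad p q s t r σ ρ ς τ)
include h

lemma coe_s_sq : (s : F) ^ 2 = -2 := by
  have := congrArg (algebraMap (𝓞 F) F) h.s_sq
  rwa [map_pow, map_neg, map_ofNat] at this

lemma coe_t_sq : (t : F) ^ 2 = -q := by
  have := congrArg (algebraMap (𝓞 F) F) h.t_sq
  simpa using this

lemma coe_r_sq : (r : F) ^ 2 = -p := by
  have := congrArg (algebraMap (𝓞 F) F) h.r_sq
  simpa using this

lemma coe_σ_s : σ (s : F) = s := congrArg (algebraMap (𝓞 F) F) h.σ_s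

lemma coe_τ_s : τ (s : F) = -s :=
  (congrArg (algebraMap (𝓞 F) F) h.τ_s).trans (map_neg (algebraMap (𝓞 F) F) s)

lemma coe_τ_t : τ (t : F) = -t :=
  (congrArg (algebraMap (𝓞 F) F) h.τ_t).trans (map_neg (algebraMap (𝓞 F) F) t)

lemma coe_τ_r : τ (r : F) = r := congrArg (algebraMap (𝓞 F) F) h.τ_r

lemma legendreSym_two_mul [Fact p.Prime] : legendreSym p (2 * q) = 1 := by
  have := h.fact_q
  have hq2 : q ≠ 2 := by rintro rfl; exact absurd h.q_mod (by norm_num)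
  rw [legendreSym.mul, (legendreSym_two_eq h.p_mod).1]
  have h1 := h.symbol
  rw [← jacobiSym.legendreSym.to_jacobiSym, legendreSym.quadratic_reciprocity_one_mod_four
    (by have := h.p_mod; omega) hq2] at h1
  rw [h1]
  norm_num

lemma hom_w [Fact p.Prime] : Nonempty (ℚ⟮(s * t : F)⟯ →+* ℚ_[p]) := by
  have hp2 : p ≠ 2 := by rintro rfl; exact absurd h.p_mod (by norm_num)
  have hq2 : q ≠ 2 := by rintro rfl; exact absurd h.q_mod (by norm_num)
  obtain ⟨c, hc⟩ := PadicInt.exists_sq_eq_of_legendreSym (p := p) (n := 2 * q) hp2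
    h.legendreSym_two_mul
  refine exists_ringHom_padic (ℓ := p) (n := 2 * q) (c := c) ?_ ?_ ?_
  · have h1 := h.coe_s_sq
    have h2 := h.coe_t_sq
    push_cast
    rw [mul_pow, h1, h2]
    ring
  · have h1 := not_isSquare_mul_primes Nat.prime_two h.q_prime hq2.symm
    rw [← Rat.isSquare_natCast_iff] at h1
    simpa using h1
  · exact_mod_cast hc

lemma not_two_mul_eq_sq {α z : F} (hz0 : z ≠ 0) (hzσ : σ z = z) (hzτ : τ z = z) :
    2 * (α * σ α * τ (α * σ α)) ≠ z ^ 2 := by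
  intro hα
  have := h.fact_p
  obtain ⟨φ⟩ := h.hom_w
  have hr0 : (r : F) ≠ 0 := h.conj.ne_zero
  have hσr : σ (r : F) = -r := h.conj.map_gen
  have hτr := h.coe_τ_r
  have hσσ := h.conj.apply_apply
  obtain ⟨β, hβ⟩ : ∃ β, β = α * τ α := ⟨_, rfl⟩
  have hτβ : τ β = β := by rw [hβ, map_mul, h.τ_τ, mul_comm]
  have hτσβ : τ (σ β) = σ β := by rw [← h.σ_τ, hτβ]
  have hαβ : α * σ α * τ (α * σ α) = β * σ β := by
    rw [hβ, map_mul, map_mul, h.σ_τ]; ring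
  obtain ⟨X, hX⟩ : ∃ X : ℚ⟮(s * t : F)⟯, (X : F) = (β + σ β) / 2 := by
    refine ⟨⟨_, h.fixed _ ?_ ?_⟩, rfl⟩
    · rw [map_div₀, map_add, hσσ, map_ofNat, add_comm]
    · rw [map_div₀, map_add, hτσβ, hτβ, map_ofNat]
  obtain ⟨Y, hY⟩ : ∃ Y : ℚ⟮(s * t : F)⟯, (Y : F) = (β - σ β) / (2 * r) := by
    refine ⟨⟨_, h.fixed _ ?_ ?_⟩, rfl⟩
    · rw [map_div₀, map_sub, map_mul, hσσ, map_ofNat, hσr]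
      field_simp
      ring
    · rw [map_div₀, map_sub, map_mul, hτσβ, hτβ, map_ofNat, hτr]
  obtain ⟨Z, hZ⟩ : ∃ Z : ℚ⟮(s * t : F)⟯, (Z : F) = z / 2 := by
    refine ⟨⟨_, h.fixed _ ?_ ?_⟩, rfl⟩
    · rw [map_div₀, hzσ, map_ofNat]
    · rw [map_div₀, hzτ, map_ofNat]
  have hXYZ : X ^ 2 + p * Y ^ 2 = 2 * Z ^ 2 := by
    apply Subtype.ext
    push_cast
    rw [hX, hY, hZ, show ((2 : ℚ⟮(s * t : F)⟯) : F) = 2 from rfl]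
    rw [hαβ] at hα
    have hr2 := h.coe_r_sq
    have hp : (p : F) = -(r : F) ^ 2 := by rw [hr2, neg_neg]
    rw [hp]
    field_simp
    linear_combination 2 * hα
  have h1 := congrArg φ hXYZ
  simp only [map_add, map_mul, map_pow, map_natCast, map_ofNat] at h1
  have h2 := Padic.eq_zero_of_sq_add_mul_sq_eq_two_mul_sq (legendreSym_two_eq h.p_mod).1 h1
  rw [map_eq_zero] at h2
  rw [h2] at hZ
  apply hz0
  simpa using hZ.symm

lemma exists_unit_norm (u : (𝓞 L)ˣ) (α : F) (hα : Algebra.norm L α = ((u : 𝓞 L) : L)) :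
    ∃ v : (𝓞 F)ˣ, Algebra.norm L ((v : 𝓞 F) : F) = ((u : 𝓞 L) : L) := by
  obtain ⟨η, x, y, hxy, hη⟩ := h.exists_unit
  have hηN := h.norm_unit hxy hη
  have hηns := h.not_isSquare_of hηN
  have hηns' := h.not_isSquare_of (z := -((η : 𝓞 L) : L)) (by
    rw [map_neg, map_neg, neg_mul_neg, hηN])
  have hηF : algebraMap L F ((η : 𝓞 L) : L) = y * t - x * s := by
    have := congrArg (algebraMap (𝓞 F) F) hη
    simp only [map_sub, map_mul, map_intCast] at this
    exact this
  have key : ∀ v : (𝓞 L)ˣ, (((u : 𝓞 L) : L) = ((η : 𝓞 L) : L) * ((v : 𝓞 L) : L) ^ 2 ∨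
      ((u : 𝓞 L) : L) = -(((η : 𝓞 L) : L) * ((v : 𝓞 L) : L) ^ 2)) → False := by
    intro v hv
    have h1 := h.conj.norm_eq α
    rw [hα] at h1
    set V := algebraMap L F ((v : 𝓞 L) : L) with hV
    have hV0 : V ≠ 0 := by simp [hV]
    set E := algebraMap L F ((η : 𝓞 L) : L) with hE
    have hE0 : E ≠ 0 := by simp [hE]
    have h2 : τ E = -E := by
      rw [hηF]
      simp only [map_sub, map_mul, map_intCast, h.coe_τ_s, h.coe_τ_t]
      ring
    have hσV : σ V = V := σ.commutes _
    have hσE : σ E = E := σ.commutes _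
    refine h.not_two_mul_eq_sq (α := α) (z := E * s * (V * τ V)) ?_ ?_ ?_ ?_
    · have hs0 : (s : F) ≠ 0 := by simpa using h.s_ne_zero
      exact mul_ne_zero (mul_ne_zero hE0 hs0) (mul_ne_zero hV0 (by simpa using hV0))
    · rw [map_mul, map_mul, map_mul, h.σ_τ, hσV, hσE, h.coe_σ_s]
    · rw [map_mul, map_mul, map_mul, h.τ_τ, h2, h.coe_τ_s]
      ring
    · rw [← h1]
      have hs2 := h.coe_s_sq
      rcases hv with hv | hv <;> rw [hv] <;>
        simp only [map_mul, map_pow, map_neg, ← hV, ← hE, h2] <;>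
        linear_combination -E ^ 2 * V ^ 2 * τ V ^ 2 * hs2
  obtain ⟨v, rfl | rfl | rfl | rfl⟩ := exists_eq_mul_sq h.rank_L h.neg_one_L η hηns hηns' u
  · refine ⟨Units.map (algebraMap (𝓞 L) (𝓞 F)).toMonoidHom v, ?_⟩
    rw [h.conj.norm_algebraMap_unit]
    simp
  · obtain ⟨e, f, hef⟩ := exists_neg_one_norm_two_mul h.p_prime h.p_mod
    have hef' : (e : 𝓞 F) ^ 2 - 2 * p * (f : 𝓞 F) ^ 2 = -1 := by
      exact_mod_cast congrArg (Int.cast : ℤ → 𝓞 F) hef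
    have hunit : (e + f * (s * r)) * -(e - f * (s * r)) = 1 := by
      linear_combination (f : 𝓞 F) ^ 2 * r ^ 2 * h.s_sq - 2 * (f : 𝓞 F) ^ 2 * h.r_sq - hef'
    set ε : (𝓞 F)ˣ := ⟨_, _, hunit, by rw [mul_comm]; exact hunit⟩ with hε
    have hεN : Algebra.norm L ((ε : 𝓞 F) : F) = -1 := by
      apply (algebraMap L F).injective
      rw [h.conj.norm_eq, ← coe_conjInt]
      have h3 : (ε : 𝓞 F) * conjInt σ ε = -1 := by
        simp only [hε, map_add, map_mul, map_intCast, h.σ_s, h.σ_r]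
        linear_combination -hunit
      have h4 := congrArg (algebraMap (𝓞 F) F) h3
      rw [map_mul, map_neg, map_one] at h4
      rw [map_neg, map_one]
      exact h4
    refine ⟨ε * Units.map (algebraMap (𝓞 L) (𝓞 F)).toMonoidHom v, ?_⟩
    have h5 := h.conj.norm_algebraMap_unit v
    rw [Units.val_mul, RingOfIntegers.coe_eq_algebraMap, map_mul, map_mul, hεN, h5]
    simp
  · exact (key v (Or.inl (by simp))).elim
  · exact (key v (Or.inr (by simp))).elim

end units
end IsTriquad

lemma Ideal.natCast_notMem {R : Type*} [CommRing R] {P : Ideal R} (hP : P ≠ ⊤) {m n : ℕ}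
    (hm : (m : R) ∈ P) (h : Nat.Coprime m n) : (n : R) ∉ P := by
  intro hn
  obtain ⟨a, b, hab⟩ := Nat.isCoprime_iff_coprime.2 h
  refine hP ((Ideal.eq_top_iff_one P).2 ?_)
  have h1 : (a : R) * m + b * n = 1 := by exact_mod_cast congrArg (Int.cast : ℤ → R) hab
  rw [← h1]
  exact P.add_mem (P.mul_mem_left _ hm) (P.mul_mem_left _ hn)

section split
variable {L K F : Type*} [Field L] [Field K] [Field F] [NumberField F] [Algebra L F] [Algebra K F]

lemma eq_mul_of_le_of_le {P Q J : Ideal (𝓞 F)} (hP : P.IsPrime) (hQ : Q.IsPrime) (hne : P ≠ Q)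
    (hJ : J ≠ ⊥) (hJP : J ≤ P) (hJQ : J ≤ Q)
    (hN : Ideal.absNorm J ∣ Ideal.absNorm P * Ideal.absNorm Q) : J = P * Q := by
  have h1 : P.IsMaximal := hP.isMaximal (fun h => hJ (le_bot_iff.1 (h ▸ hJP)))
  have h2 : Q.IsMaximal := hQ.isMaximal (fun h => hJ (le_bot_iff.1 (h ▸ hJQ)))
  refine Ideal.eq_of_le_of_absNorm_dvd hJ ?_ (by rwa [map_mul])
  rw [Ideal.mul_eq_inf_of_isCoprime (Ideal.isCoprime_iff_sup_eq.2 (h1.coprime_of_ne h2 hne))]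
  exact le_inf hJP hJQ

/-- An ideal `J` is a product of two conjugate primes, separated by the elements `x` and `x'`. -/
lemma exists_split {J : Ideal (𝓞 F)} {x x' : 𝓞 F} {ρ : F ≃ₐ[K] F} {σ : F ≃ₐ[L] F} {n : ℕ}
    (hn : 1 < n) (hJn : Ideal.absNorm J = n ^ 2)
    (hJx : ∀ Q : Ideal (𝓞 F), Q.IsPrime → J ≤ Q → x ∈ Q ∨ x' ∈ Q)
    (hJx' : ∀ Q : Ideal (𝓞 F), Q.IsPrime → J ≤ Q → x ∈ Q → x' ∉ Q)
    (hJρ : J ≤ J.map (conjInt ρ)) (hJσ : J ≤ J.map (conjInt σ))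
    (hρ : conjInt ρ x = x') (hρ' : conjInt ρ x' = x) (hσ : conjInt σ x = x)
    (hσ' : conjInt σ x' = x')
    (hN : ∀ Q : Ideal (𝓞 F), Q.IsPrime → J ≤ Q → n ∣ Ideal.absNorm Q) :
    ∃ P : Ideal (𝓞 F), P.IsPrime ∧ P * P.map (conjInt ρ) = J ∧ Ideal.absNorm P = n ∧
      (∀ Q : Ideal (𝓞 F), Q.IsPrime → J ≤ Q → Q = P ∨ Q = P.map (conjInt ρ)) ∧
      P.map (conjInt σ) = P := by
  have hJ0 : J ≠ ⊥ := by
    rintro rfl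
    rw [Ideal.absNorm_bot] at hJn
    exact absurd (pow_eq_zero_iff two_ne_zero |>.1 hJn.symm) (by omega)
  have hJtop : J ≠ ⊤ := by
    rintro rfl
    rw [Ideal.absNorm_top] at hJn
    nlinarith
  obtain ⟨P, hPmax, hJP⟩ := Ideal.exists_le_maximal J hJtop
  have hP := hPmax.isPrime
  have hPρ := Ideal.map_conjInt_isPrime ρ hP
  have hPσ := Ideal.map_conjInt_isPrime σ hP
  have hJPρ : J ≤ P.map (conjInt ρ) := hJρ.trans (Ideal.map_mono hJP)
  have hJPσ : J ≤ P.map (conjInt σ) := hJσ.trans (Ideal.map_mono hJP)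
  have hne : P ≠ P.map (conjInt ρ) := by
    intro h
    rcases hJx P hP hJP with h1 | h1
    · exact hJx' P hP hJP h1 (h ▸ hρ ▸ Ideal.mem_map_of_mem (conjInt ρ) h1)
    · exact hJx' P hP hJP (h ▸ hρ' ▸ Ideal.mem_map_of_mem (conjInt ρ) h1) h1
  have hmul : J = P * P.map (conjInt ρ) := by
    refine eq_mul_of_le_of_le hP hPρ hne hJ0 hJP hJPρ ?_
    rw [hJn, sq]
    exact mul_dvd_mul (hN P hP hJP) (hN _ hPρ hJPρ)
  have hQ : ∀ Q : Ideal (𝓞 F), Q.IsPrime → J ≤ Q → Q = P ∨ Q = P.map (conjInt ρ) := by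
    intro Q hQ hJQ
    rw [hmul] at hJQ
    have hP0 : P ≠ ⊥ := fun h => hJ0 (le_bot_iff.1 (h ▸ hJP))
    rcases (hQ.mul_le).1 hJQ with h1 | h1
    · exact Or.inl ((hPmax.eq_of_le hQ.ne_top h1).symm)
    · refine Or.inr (((hPρ.isMaximal ?_).eq_of_le hQ.ne_top h1).symm)
      rwa [Ne, Ideal.map_conjInt_eq_bot]
  refine ⟨P, hP, hmul.symm, ?_, hQ, ?_⟩
  · obtain ⟨a, ha⟩ := hN P hP hJP
    obtain ⟨b, hb⟩ := hN _ hPρ hJPρ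
    rw [hmul, map_mul, ha, hb] at hJn
    have h1 : n ^ 2 * (a * b) = n ^ 2 * 1 := by linear_combination hJn
    have h2 := Nat.eq_of_mul_eq_mul_left (by positivity) h1
    rw [ha, Nat.eq_one_of_mul_eq_one_right h2, mul_one]
  · rcases hQ _ hPσ hJPσ with h1 | h1
    · exact h1
    · exfalso
      rcases hJx P hP hJP with h2 | h2
      · have h3 := Ideal.mem_map_of_mem (conjInt σ) h2
        rw [hσ, h1] at h3
        exact hJx' _ hPρ hJPρ h3 (hρ ▸ Ideal.mem_map_of_mem (conjInt ρ) h2)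
      · have h3 := Ideal.mem_map_of_mem (conjInt σ) h2
        rw [hσ', h1] at h3
        exact hJx' _ hPρ hJPρ (hρ' ▸ Ideal.mem_map_of_mem (conjInt ρ) h2) h3

end split

namespace IsTriquad
variable {p q : ℕ} {L K F : Type*} [Field L] [NumberField L] [Field K] [NumberField K]
    [Field F] [NumberField F] [Algebra L F] [Algebra K F] {s t r : 𝓞 F} {σ : F ≃ₐ[L] F}
    {ρ : F ≃ₐ[K] F} {ς τ : F ≃ₐ[ℚ] F}

section primes
variable (h : IsTriquad p q s t r σ ρ ς τ)
include h

lemma exists_sq_modEq : ∃ c : ℤ, (p : ℤ) ∣ c ^ 2 - 2 * q := by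
  have := h.fact_p
  have h1 := h.legendreSym_two_mul
  have h2 : IsSquare ((2 * q : ℤ) : ZMod p) := by
    by_contra h3
    rw [(legendreSym.eq_neg_one_iff p).2 h3] at h1
    norm_num at h1
  obtain ⟨c, hc⟩ := h2
  refine ⟨c.val, (ZMod.intCast_zmod_eq_zero_iff_dvd _ p).1 ?_⟩
  push_cast at hc ⊢
  rw [ZMod.natCast_zmod_val, hc]
  ring

lemma exists_prime_p : ∃ P : Ideal (𝓞 F), P.IsPrime ∧
    P * P.map (conjInt ρ) = Ideal.span {r} ∧ Ideal.absNorm P = p ^ 2 ∧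
      (∀ Q : Ideal (𝓞 F), Q.IsPrime → r ∈ Q → Q = P ∨ Q = P.map (conjInt ρ)) ∧
      P.map (conjInt σ) = P := by
  have := h.fact_p
  obtain ⟨c, d, hc⟩ := h.exists_sq_modEq
  have hc' : (c : 𝓞 F) ^ 2 - 2 * q = p * d := by
    exact_mod_cast congrArg (Int.cast : ℤ → 𝓞 F) hc
  have hpmem : ∀ Q : Ideal (𝓞 F), r ∈ Q → (p : 𝓞 F) ∈ Q := by
    intro Q hQ
    have h1 := Q.neg_mem (Q.pow_mem_of_mem hQ 2 two_pos)
    rwa [h.r_sq, neg_neg] at h1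
  have hcop : Nat.Coprime p (8 * q) := by
    have hp2 : p ≠ 2 := by rintro rfl; exact absurd h.p_mod (by norm_num)
    have hpq : p ≠ q := by
      rintro rfl; have := h.p_mod; have := h.q_mod; omega
    refine Nat.Coprime.mul_right ?_ ((Nat.coprime_primes h.p_prime h.q_prime).2 hpq)
    exact Nat.Coprime.pow_right 3 ((Nat.coprime_primes h.p_prime Nat.prime_two).2 hp2)
  simp only [← Ideal.span_singleton_le_iff_mem]
  refine exists_split (J := Ideal.span {r}) (x := s * t - c)
    (x' := -(s * t) - c) (ρ := ρ) (σ := σ) (n := p ^ 2)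
    (Nat.one_lt_pow two_ne_zero h.p_prime.one_lt) ?_ ?_ ?_ ?_ ?_ ?_ ?_ ?_ ?_ ?_
  · rw [absNorm_span_of_sq (c := -p) (by rw [h.r_sq]; simp) (n := 4) (by rw [h.finrank]),
      ← pow_mul, Int.natAbs_neg, Int.natAbs_natCast]
  · intro Q hQ hrQ
    rw [Ideal.span_singleton_le_iff_mem] at hrQ
    refine hQ.mem_or_mem ?_
    have h1 : (s * t - c) * (-(s * t) - c) = p * d := by
      rw [← hc']
      linear_combination -t ^ 2 * h.s_sq + 2 * h.t_sq
    rw [h1]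
    exact Q.mul_mem_right _ (hpmem Q hrQ)
  · intro Q hQ hrQ hx hx'
    rw [Ideal.span_singleton_le_iff_mem] at hrQ
    refine Ideal.natCast_notMem hQ.ne_top (hpmem Q hrQ) hcop ?_
    have h1 : ((8 * q : ℕ) : 𝓞 F) = ((s * t - c) + (-(s * t) - c)) * (-2 * c) - p * d * 4 := by
      push_cast
      linear_combination -4 * hc'
    rw [h1]
    exact Q.sub_mem (Q.mul_mem_right _ (Q.add_mem hx hx'))
      (Q.mul_mem_right _ (Q.mul_mem_right _ (hpmem Q hrQ)))
  · rw [Ideal.map_conjInt_span, h.ρ_r]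
  · rw [Ideal.map_conjInt_span, h.σ_r, Ideal.span_singleton_neg]
  · simp only [map_sub, map_mul, h.ρ_s, h.ρ_t, map_intCast, neg_mul]
  · simp only [map_sub, map_mul, map_neg, h.ρ_s, h.ρ_t, map_intCast, neg_mul, neg_neg]
  · simp only [map_sub, map_mul, h.σ_s, h.σ_t, map_intCast]
  · simp only [map_sub, map_mul, map_neg, h.σ_s, h.σ_t, map_intCast]
  · intro Q hQ hrQ
    rw [Ideal.span_singleton_le_iff_mem] at hrQ
    exact sq_dvd_absNorm hQ (hpmem Q hrQ) (x := s) (n := -2) (by rw [h.s_sq]; norm_num)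
      (legendreSym_two_eq h.p_mod).2.1

end primes
end IsTriquad

namespace IsTriquad
variable {p q : ℕ} {L K F : Type*} [Field L] [NumberField L] [Field K] [NumberField K]
    [Field F] [NumberField F] [Algebra L F] [Algebra K F] {s t r : 𝓞 F} {σ : F ≃ₐ[L] F}
    {ρ : F ≃ₐ[K] F} {ς τ : F ≃ₐ[ℚ] F}

section primes
variable (h : IsTriquad p q s t r σ ρ ς τ)
include h

lemma exists_mul_eq_sub_one : ∃ l : 𝓞 F, s * l = r - 1 := by
  obtain ⟨k, hk⟩ : ∃ k, p = 8 * k + 5 := ⟨p / 8, by have := h.p_mod; omega⟩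
  have hs : (s : F) ≠ 0 := RingOfIntegers.coe_ne_zero_iff.2 h.s_ne_zero
  have h1 : ((((r : F) - 1) / s) ^ 2) = ((4 * k + 2 + r : 𝓞 F) : F) := by
    have h2 : (r : F) ^ 2 = -(8 * k + 5) := by rw [h.coe_r_sq, hk]; push_cast; ring
    rw [div_pow, h.coe_s_sq]
    simp only [RingOfIntegers.coe_eq_algebraMap, map_add, map_mul, map_natCast, map_ofNat] at h2 ⊢
    linear_combination -h2 / 2
  have h3 : IsIntegral ℤ (((r : F) - 1) / s) :=
    IsIntegral.of_pow two_pos (h1 ▸ RingOfIntegers.isIntegral_coe _)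
  obtain ⟨l, hl⟩ := exists_coe_eq h3
  refine ⟨l, RingOfIntegers.ext ?_⟩
  simp only [RingOfIntegers.coe_eq_algebraMap, map_mul, map_sub, map_one, hl] at hs ⊢
  field_simp

lemma two_mem_iff {Q : Ideal (𝓞 F)} (hQ : Q.IsPrime) : (2 : 𝓞 F) ∈ Q ↔ s ∈ Q := by
  have h1 : (2 : 𝓞 F) = -(s * s) := by linear_combination h.s_sq
  rw [h1, neg_mem_iff, hQ.mul_mem_iff_mem_or_mem, or_self]

lemma exists_prime_two : ∃ T : Ideal (𝓞 F), T.IsPrime ∧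
    (T * T.map (conjInt ς)) ^ 2 = Ideal.span {s} ∧ Ideal.absNorm T = 2 ∧
      (∀ Q : Ideal (𝓞 F), Q.IsPrime → 2 ∈ Q → Q = T ∨ Q = T.map (conjInt ς)) ∧
      T.map (conjInt σ) = T := by
  obtain ⟨k, hk⟩ : ∃ k, p = 8 * k + 5 := ⟨p / 8, by have := h.p_mod; omega⟩
  obtain ⟨m, hm⟩ : ∃ m, q = 8 * m + 7 := ⟨q / 8, by have := h.q_mod; omega⟩
  obtain ⟨l, hl⟩ := h.exists_mul_eq_sub_one
  have hs0 := h.s_ne_zero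
  have hs := h.s_sq
  have hr : r ^ 2 = -(8 * k + 5) := by rw [h.r_sq, hk]; push_cast; ring
  have ht : t ^ 2 = -(8 * m + 7) := by rw [h.t_sq, hm]; push_cast; ring
  have hl2 : l ^ 2 = 4 * k + 3 + s * l := by
    have h2 : (2 : 𝓞 F) ≠ 0 := two_ne_zero
    refine mul_left_cancel₀ (pow_ne_zero 2 hs0) ?_
    linear_combination (s * l + r - 1 + 2) * hl + hr - (4 * k + 3 + s * l) * hs
  obtain ⟨o, ho⟩ := exists_half (by have := h.q_mod; omega) h.t_sq
  have ho2 : o * (1 - o) = 2 * (m + 1) := by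
    refine mul_left_cancel₀ (show (4 : 𝓞 F) ≠ 0 by norm_num) ?_
    linear_combination (1 - 2 * o - t) * ho - ht
  have hςl : conjInt ς l = l := by
    have h1 := congrArg (conjInt ς) hl
    rw [map_mul, map_sub, map_one, h.ς_s, h.ς_r, ← hl] at h1
    exact mul_left_cancel₀ hs0 h1
  have hσl : conjInt σ l = s - l := by
    have h1 := congrArg (conjInt σ) hl
    rw [map_mul, map_sub, map_one, h.σ_s, h.σ_r] at h1
    refine mul_left_cancel₀ hs0 ?_
    linear_combination h1 + hl - hs
  have hςo : conjInt ς o = 1 - o := by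
    have h1 := congrArg (conjInt ς) ho
    rw [map_mul, map_add, map_one, h.ς_t, map_ofNat] at h1
    refine mul_left_cancel₀ (two_ne_zero : (2 : 𝓞 F) ≠ 0) ?_
    linear_combination h1 + ho
  have hσo : conjInt σ o = o := by
    have h1 := congrArg (conjInt σ) ho
    rw [map_mul, map_add, map_one, h.σ_t, map_ofNat, ← ho] at h1
    exact mul_left_cancel₀ two_ne_zero h1
  obtain ⟨J, hJ⟩ : ∃ J : Ideal (𝓞 F), J = Ideal.span {s, l - 1} := ⟨_, rfl⟩
  have hsJ : s ∈ J := hJ ▸ Ideal.subset_span (by simp)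
  have hlJ : l - 1 ∈ J := hJ ▸ Ideal.subset_span (by simp)
  have hJle : ∀ I : Ideal (𝓞 F), J ≤ I ↔ s ∈ I ∧ l - 1 ∈ I := by
    intro I
    rw [hJ, Ideal.span_le, Set.insert_subset_iff, Set.singleton_subset_iff]
    rfl
  have hll : (l - 1) ^ 2 = s * (l + s * l - 2 * s * (k + 1)) := by
    linear_combination hl2 + (-l + 2 * k + 2) * hs
  have hJ2 : J ^ 2 = Ideal.span {s} := by
    refine le_antisymm ?_ ?_
    · rw [sq, hJ, Ideal.span_mul_span', Ideal.span_le]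
      rintro _ ⟨x, hx, y, hy, rfl⟩
      simp only [Set.mem_insert_iff, Set.mem_singleton_iff] at hx hy
      simp only [SetLike.mem_coe, Ideal.mem_span_singleton]
      rcases hx with rfl | rfl
      · exact Dvd.intro _ rfl
      · rcases hy with rfl | rfl
        · exact Dvd.intro_left _ rfl
        · rw [← sq, hll]
          exact Dvd.intro _ rfl
    · rw [Ideal.span_singleton_le_iff_mem]
      have h1 : s = (l - 1) * (l - 1) - s * (l - 1) - s * s * (l - 2 * (k + 1)) := by
        linear_combination -hll
      rw [h1, sq]
      exact Ideal.sub_mem _ (Ideal.sub_mem _ (Ideal.mul_mem_mul hlJ hlJ)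
        (Ideal.mul_mem_mul hsJ hlJ)) (Ideal.mul_mem_right _ _ (Ideal.mul_mem_mul hsJ hsJ))
  have hJQ : ∀ Q : Ideal (𝓞 F), Q.IsPrime → (2 ∈ Q ↔ J ≤ Q) := by
    intro Q hQ
    rw [h.two_mem_iff hQ, hJle]
    refine ⟨fun h1 => ⟨h1, hQ.mem_of_pow_mem 2 ?_⟩, And.left⟩
    rw [hll]
    exact Q.mul_mem_right _ h1
  have key : ∃ T : Ideal (𝓞 F), T.IsPrime ∧
      T * T.map (conjInt ς) = J ∧ Ideal.absNorm T = 2 ∧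
      (∀ Q : Ideal (𝓞 F), Q.IsPrime → J ≤ Q → Q = T ∨ Q = T.map (conjInt ς)) ∧
      T.map (conjInt σ) = T := by
    refine exists_split (x := o) (x' := 1 - o) one_lt_two ?_ ?_ ?_ ?_ ?_ hςo ?_ hσo ?_ ?_
    · have h1 : Ideal.absNorm J ^ 2 = (2 ^ 2) ^ 2 := by
        rw [← map_pow, hJ2, absNorm_span_of_sq (c := -2) (by rw [hs]; simp) (n := 4)
          (by rw [h.finrank])]
        rfl
      exact Nat.pow_left_injective two_ne_zero h1
    · intro Q hQ hJQ'
      refine hQ.mem_or_mem ?_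
      rw [ho2]
      exact Q.mul_mem_right _ ((hJQ Q hQ).2 hJQ')
    · intro Q hQ _ h1 h2
      refine hQ.ne_top ((Ideal.eq_top_iff_one Q).2 ?_)
      have := Q.add_mem h1 h2
      rwa [add_sub_cancel] at this
    · rw [hJle]
      have h1 := Ideal.mem_map_of_mem (conjInt ς) hsJ
      have h2 := Ideal.mem_map_of_mem (conjInt ς) hlJ
      rw [map_sub, map_one, hςl] at h2
      rw [h.ς_s] at h1
      exact ⟨h1, h2⟩
    · rw [hJle]
      have h1 := Ideal.mem_map_of_mem (conjInt σ) hsJ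
      have h2 := Ideal.mem_map_of_mem (conjInt σ) hlJ
      rw [map_sub, map_one, hσl] at h2
      rw [h.σ_s] at h1
      refine ⟨h1, ?_⟩
      have h3 : l - 1 = s * (1 + s) - (s - l - 1) := by linear_combination -hs
      rw [h3]
      exact Ideal.sub_mem _ (Ideal.mul_mem_right _ _ h1) h2
    · rw [map_sub, map_one, hςo]; ring
    · rw [map_sub, map_one, hσo]
    · intro Q hQ hJQ'
      obtain ⟨n, hn, h1⟩ := exists_absNorm_eq_pow hQ Nat.prime_two
        (by exact_mod_cast (hJQ Q hQ).2 hJQ')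
      rw [h1]
      exact dvd_pow_self 2 hn
  obtain ⟨T, h1, h2, h3, h4, h5⟩ := key
  exact ⟨T, h1, by rw [h2, hJ2], h3, fun Q hQ hQ2 => h4 Q hQ ((hJQ Q hQ).1 hQ2), h5⟩

end primes
end IsTriquad

lemma Subgroup.mem_closure_pair_of_sq_eq_one {G : Type*} [CommGroup G] {a b c : G} (ha : a ^ 2 = 1)
    (hb : b ^ 2 = 1) (hc : c ∈ Subgroup.closure {a, b}) :
    c = 1 ∨ c = a ∨ c = b ∨ c = a * b := by
  have key : ∀ {x : G} (_ : x ^ 2 = 1) (n : ℤ), x ^ n = 1 ∨ x ^ n = x := by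
    intro x hx n
    have hx' : x ^ (2 : ℤ) = 1 := by exact_mod_cast hx
    rcases Int.even_or_odd' n with ⟨k, rfl | rfl⟩
    · exact Or.inl (by rw [zpow_mul, hx', one_zpow])
    · exact Or.inr (by rw [zpow_add, zpow_mul, hx', one_zpow, one_mul, zpow_one])
  obtain ⟨m, n, rfl⟩ := Subgroup.mem_closure_pair.1 hc
  rcases key ha m with h1 | h1 <;> rcases key hb n with h2 | h2 <;> simp [h1, h2]

namespace IsTriquad
variable {p q : ℕ} {L K F : Type*} [Field L] [NumberField L] [Field K] [NumberField K]
    [Field F] [NumberField F] [Algebra L F] [Algebra K F] {s t r : 𝓞 F} {σ : F ≃ₐ[L] F}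
    {ρ : F ≃ₐ[K] F} {ς τ : F ≃ₐ[ℚ] F}

section ambiguous
variable (h : IsTriquad p q s t r σ ρ ς τ)
include h

lemma exists_mul_eq (a b : ℤ) (hab : p * a ^ 2 - q * b ^ 2 = -2) :
    ∃ θ : 𝓞 F, s * θ = b * t - a * r := by
  have hs : (s : F) ≠ 0 := RingOfIntegers.coe_ne_zero_iff.2 h.s_ne_zero
  have hab' : (p * a ^ 2 - q * b ^ 2 : F) = -2 := by
    exact_mod_cast congrArg (Int.cast : ℤ → F) hab
  have h1 : ((((b : F) * t - a * r) / s) ^ 2) = ((p * a ^ 2 + 1 + a * b * (r * t) : 𝓞 F) : F) := by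
    rw [div_pow, h.coe_s_sq]
    have h2 := h.coe_r_sq
    have h3 := h.coe_t_sq
    simp only [RingOfIntegers.coe_eq_algebraMap, map_add, map_mul, map_natCast, map_intCast,
      map_pow, map_one] at h2 h3 ⊢
    linear_combination -hab' / 2 - b ^ 2 / 2 * h3 - a ^ 2 / 2 * h2
  obtain ⟨θ, hθ⟩ := exists_coe_eq (IsIntegral.of_pow (R := ℤ) two_pos
    (by rw [h1]; exact RingOfIntegers.isIntegral_coe _))
  refine ⟨θ, RingOfIntegers.ext ?_⟩
  simp only [RingOfIntegers.coe_eq_algebraMap, map_mul, map_sub, map_intCast, hθ] at hs ⊢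
  field_simp

lemma exists_inverse_class {J : Ideal (𝓞 F)} (hJ : J ^ 2 = Ideal.span {s}) :
    ∃ D : Ideal (𝓞 F), D ≠ ⊥ ∧ D.map (conjInt σ) = D ∧ idealClass J * idealClass D = 1 ∧
      ∀ Q : Ideal (𝓞 F), Q.IsPrime → D ≤ Q → 2 ∉ Q := by
  obtain ⟨a, b, hab⟩ := exists_mul_sq_sub_mul_sq h.p_prime h.p_mod h.q_prime h.q_mod h.symbol
  obtain ⟨η, x, y, hxy, hη⟩ := h.exists_unit
  obtain ⟨θ, hθ⟩ := h.exists_mul_eq a b hab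
  have hs0 := h.s_ne_zero
  have hs := h.s_sq
  have ht := h.t_sq
  have hr := h.r_sq
  have hab' : (p * a ^ 2 - q * b ^ 2 : 𝓞 F) = -2 := by
    exact_mod_cast congrArg (Int.cast : ℤ → 𝓞 F) hab
  have hxy' : 2 * (x : 𝓞 F) ^ 2 - q * (y : 𝓞 F) ^ 2 = 1 := by
    exact_mod_cast congrArg (Int.cast : ℤ → 𝓞 F) hxy
  have hσθ : s * conjInt σ θ = b * t + a * r := by
    have h1 := congrArg (conjInt σ) hθ
    simp only [map_mul, map_sub, map_intCast, h.σ_s, h.σ_t, h.σ_r] at h1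
    rw [h1]
    ring
  have hθθ : θ * conjInt σ θ = 1 := by
    refine mul_left_cancel₀ (pow_ne_zero 2 hs0) ?_
    linear_combination hθ * (s * conjInt σ θ) + (b * t - a * r) * hσθ + b ^ 2 * ht - a ^ 2 * hr
      + hab' - hs
  have hθadd : θ + conjInt σ θ = -(b * (s * t)) := by
    refine mul_left_cancel₀ hs0 ?_
    linear_combination hθ + hσθ + b * t * hs
  obtain ⟨μ, hμ⟩ : ∃ μ : 𝓞 F, μ = 2 * x + b * q * y - (y + x * b) * (s * t) := ⟨_, rfl⟩
  obtain ⟨e, he⟩ : ∃ e : 𝓞 F, e = y * t - x * s := ⟨_, rfl⟩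
  have hμσ : conjInt σ μ = μ := by
    simp only [hμ, map_sub, map_add, map_mul, map_intCast, map_natCast, map_ofNat, h.σ_s, h.σ_t]
  have hw : (s * t) ^ 2 = 2 * q := by linear_combination t ^ 2 * hs - 2 * ht
  have hsμ : s * e * μ = 2 - b * (s * t) := by
    rw [he, hμ]
    linear_combination (-x * (2 * x + b * q * y - (y + x * b) * (s * t))) * hs
      - y * (y + x * b) * hw + (2 - b * (s * t)) * hxy'
  have hμμ : μ * (2 * x + b * q * y + (y + x * b) * (s * t)) = -(p * a ^ 2) := by
    rw [hμ]
    linear_combination -(y + x * b) ^ 2 * hw + (2 - q * b ^ 2) * hxy' + hab'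
  obtain ⟨m, hm⟩ : ∃ m : ℤ, p * a ^ 2 = 2 * m + 1 := by
    have hp : Odd (p : ℤ) := by
      have := h.p_mod
      exact (Int.odd_coe_nat p).2 (Nat.odd_iff.2 (by omega))
    have hq : Odd (q : ℤ) := by
      have := h.q_mod
      exact (Int.odd_coe_nat q).2 (Nat.odd_iff.2 (by omega))
    refine hp.mul (Odd.pow (Int.not_even_iff_odd.1 fun ha => ?_))
    have hb : Even b := by
      have h1 : Even (q * b ^ 2) := by
        have h2 : (q * b ^ 2 : ℤ) = p * a ^ 2 + 2 := by linarith
        rw [h2]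
        exact ((ha.pow_of_ne_zero two_ne_zero).mul_left _).add even_two
      exact (Int.even_pow.1 ((Int.even_mul.1 h1).resolve_left (Int.not_even_iff_odd.2 hq))).1
    obtain ⟨c, rfl⟩ := ha
    obtain ⟨d, rfl⟩ := hb
    have h1 : 4 * (p * c ^ 2 - q * d ^ 2) = -2 := by linarith
    omega
  have hm' : (p * a ^ 2 : 𝓞 F) = 2 * m + 1 := by
    exact_mod_cast congrArg (Int.cast : ℤ → 𝓞 F) hm
  have hμ2 : ∀ Q : Ideal (𝓞 F), Q.IsPrime → μ ∈ Q → 2 ∉ Q := by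
    intro Q hQ h1 h2
    refine hQ.ne_top ((Ideal.eq_top_iff_one Q).2 ?_)
    have h3 : (1 : 𝓞 F) = -(μ * (2 * x + b * q * y + (y + x * b) * (s * t))) - 2 * m := by
      linear_combination hμμ - hm'
    rw [h3]
    exact Q.sub_mem (Q.neg_mem (Q.mul_mem_right _ h1)) (Q.mul_mem_right _ h2)
  have hμ0 : μ ≠ 0 := by
    intro h1
    rw [h1, zero_mul] at hμμ
    have h2 : (p * a ^ 2 : ℤ) = 0 := by exact_mod_cast neg_eq_zero.1 hμμ.symm
    omega
  have hunit : IsUnit (θ * e) := by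
    refine IsUnit.mul (IsUnit.of_mul_eq_one _ hθθ) ?_
    rw [he, ← hη]
    exact η.isUnit.map _
  have hspan : Ideal.span {1 + θ} ^ 2 = J ^ 2 * Ideal.span {μ} := by
    have h1 : (1 + θ) ^ 2 = θ * e * (s * μ) := by
      linear_combination θ * hθadd - hθθ - θ * hsμ
    rw [Ideal.span_singleton_pow, h1, hJ, Ideal.span_singleton_mul_span_singleton,
      Ideal.span_singleton_mul_left_unit hunit]
  obtain ⟨D, hD⟩ : J ∣ Ideal.span {1 + θ} :=
    (UniqueFactorizationMonoid.pow_dvd_pow_iff_dvd two_ne_zero).1 ⟨_, hspan⟩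
  have hJ0 : J ≠ ⊥ := by
    rintro rfl
    rw [← Ideal.zero_eq_bot, zero_pow two_ne_zero, Ideal.zero_eq_bot, eq_comm, Ideal.span_singleton_eq_bot] at hJ
    exact hs0 hJ
  have hD2 : D ^ 2 = Ideal.span {μ} := by
    rw [hD, mul_pow] at hspan
    exact mul_left_cancel₀ (pow_ne_zero 2 hJ0) hspan
  have hD0 : D ≠ ⊥ := by
    rintro rfl
    rw [← Ideal.zero_eq_bot, zero_pow two_ne_zero, Ideal.zero_eq_bot, eq_comm, Ideal.span_singleton_eq_bot] at hD2
    exact hμ0 hD2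
  refine ⟨D, hD0, ?_, ?_, fun Q hQ hDQ => hμ2 Q hQ ?_⟩
  · refine (pow_left_injective two_ne_zero) ?_
    simp only [← Ideal.map_conjInt_pow, hD2, Ideal.map_conjInt_span, hμσ]
  · rw [← idealClass_mul hJ0 hD0, ← hD, idealClass_span]
  · rw [← Ideal.span_singleton_le_iff_mem, ← hD2]
    exact (Ideal.pow_le_self two_ne_zero).trans hDQ

end ambiguous
end IsTriquad

namespace IsTriquad
variable {p q : ℕ} {L K F : Type*} [Field L] [NumberField L] [Field K] [NumberField K]
    [Field F] [NumberField F] [Algebra L F] [Algebra K F] {s t r : 𝓞 F} {σ : F ≃ₐ[L] F}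
    {ρ : F ≃ₐ[K] F} {ς τ : F ≃ₐ[ℚ] F}

section ambiguous
variable (h : IsTriquad p q s t r σ ρ ς τ)
include h

lemma idealClass_pow_card_sq {P : Ideal (𝓞 F)} (hP : P ≠ ⊥) (hσ : P.map (conjInt σ) = P) :
    (idealClass P ^ Nat.card (ClassGroup (𝓞 L))) ^ 2 = 1 := by
  have h1 := h.conj.mul_conj P
  rw [hσ] at h1
  rw [← pow_mul, mul_comm, pow_mul, sq, ← idealClass_mul hP hP, h1]
  refine idealClass_map_pow_card (fun h2 => hP ?_)
  rw [h2, Ideal.map_bot] at h1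
  exact (mul_self_eq_zero (a := P)).1 h1

lemma eq_of_sq_eq_one {P T : Ideal (𝓞 F)} (hP : P ≠ ⊥) (hT : T ≠ ⊥)
    (hPr : P * P.map (conjInt ρ) = Ideal.span {r})
    (hPQ : ∀ Q : Ideal (𝓞 F), Q.IsPrime → r ∈ Q → Q = P ∨ Q = P.map (conjInt ρ))
    (hPσ : P.map (conjInt σ) = P) (hTs : (T * T.map (conjInt ς)) ^ 2 = Ideal.span {s})
    (hTQ : ∀ Q : Ideal (𝓞 F), Q.IsPrime → 2 ∈ Q → Q = T ∨ Q = T.map (conjInt ς))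
    (hTσ : T.map (conjInt σ) = T) {n : ℕ} (hn : n = Nat.card (ClassGroup (𝓞 L)))
    {c : ClassGroup (𝓞 F)} (hc : c ^ 2 = 1) :
    c = 1 ∨ c = idealClass P ^ n ∨ c = idealClass T ^ n ∨ c = idealClass P ^ n * idealClass T ^ n := by
  have hP' : P.map (conjInt ρ) ≠ ⊥ := by rwa [Ne, Ideal.map_conjInt_eq_bot]
  have hT' : T.map (conjInt ς) ≠ ⊥ := by rwa [Ne, Ideal.map_conjInt_eq_bot]
  obtain ⟨H, hH⟩ : ∃ H : Subgroup (ClassGroup (𝓞 F)), H = (Subgroup.closure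
    {idealClass P ^ n, idealClass T ^ n}).comap (powMonoidHom n) := ⟨_, rfl⟩
  have hmem : ∀ {x}, x ∈ H ↔ x ^ n ∈ Subgroup.closure {idealClass P ^ n, idealClass T ^ n} := by
    intro x; rw [hH]; rfl
  have hPH : idealClass P ∈ H := hmem.2 (Subgroup.subset_closure (by simp))
  have hTH : idealClass T ∈ H := hmem.2 (Subgroup.subset_closure (by simp))
  have hPH' : idealClass (P.map (conjInt ρ)) ∈ H := by
    have h1 : idealClass P * idealClass (P.map (conjInt ρ)) = 1 := by
      rw [← idealClass_mul hP hP', hPr, idealClass_span]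
    rw [eq_inv_of_mul_eq_one_right h1]
    exact H.inv_mem hPH
  have hbase : ∀ J : Ideal (𝓞 L), J ≠ ⊥ →
      idealClass (J.map (algebraMap (𝓞 L) (𝓞 F))) ∈ H := by
    intro J hJ
    rw [hmem, hn, idealClass_map_pow_card hJ]
    exact Subgroup.one_mem _
  have hram : ∀ Q : Ideal (𝓞 F), Q.IsPrime → (∀ x, x - conjInt σ x ∈ Q) →
      2 ∈ Q ∨ idealClass Q ∈ H := by
    intro Q hQ hx
    have h1 := hx r
    rw [h.σ_r, sub_neg_eq_add, ← two_mul] at h1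
    refine (hQ.mem_or_mem h1).imp_right fun h2 => ?_
    rcases hPQ Q hQ h2 with rfl | rfl
    exacts [hPH, hPH']
  have hTH' : idealClass (T.map (conjInt ς)) ∈ H := by
    obtain ⟨D, hD, hDσ, hJD, hD2⟩ := h.exists_inverse_class hTs
    have h1 := h.conj.idealClass_mem_of_stable H hbase hD hDσ
      fun Q hQ _ hDQ _ hx => (hram Q hQ hx).resolve_left (hD2 Q hQ hDQ)
    rw [eq_inv_of_mul_eq_one_right hJD, H.inv_mem_iff, idealClass_mul hT hT'] at h1
    exact (H.mul_mem_cancel_left hTH).1 h1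
  have hcH : c ∈ H := by
    obtain ⟨I, hI, hIσ, rfl⟩ := h.conj.exists_stable h.odd_L h.exists_unit_norm hc
    refine h.conj.idealClass_mem_of_stable H hbase hI hIσ fun Q hQ _ _ _ hx => ?_
    refine (hram Q hQ hx).elim (fun h2 => ?_) id
    rcases hTQ Q hQ h2 with rfl | rfl
    exacts [hTH, hTH']
  rw [hmem, eq_pow_of_sq_eq_one (hn ▸ h.odd_L) hc] at hcH
  exact Subgroup.mem_closure_pair_of_sq_eq_one (hn ▸ h.idealClass_pow_card_sq hP hPσ)
    (hn ▸ h.idealClass_pow_card_sq hT hTσ) hcH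

end ambiguous
end IsTriquad

lemma exists_span_mul_eq_of_isSquare {R : Type*} [CommRing R] [IsDedekindDomain R] {I : Ideal R}
    (hI : I ≠ ⊥) (h : IsSquare (idealClass I)) :
    ∃ (x y : R) (A : Ideal R), x ≠ 0 ∧ y ≠ 0 ∧ A ≠ ⊥ ∧
      Ideal.span {x} * I = Ideal.span {y} * A ^ 2 := by
  obtain ⟨c, hc⟩ := h
  obtain ⟨A, hA, rfl⟩ := exists_idealClass_eq c
  rw [← sq, ← idealClass_pow hA, idealClass_eq_iff hI (pow_ne_zero 2 hA)] at hc
  obtain ⟨x, y, hx, hy, hxy⟩ := hc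
  exact ⟨x, y, A, hx, hy, hA, hxy⟩

lemma isPrincipal_of_sq_of_odd {R : Type*} [CommRing R] [IsDedekindDomain R]
    (hodd : Odd (Nat.card (ClassGroup R))) {B : Ideal R} {x y : R} (hx : x ≠ 0) (hB : B ≠ ⊥)
    (h : Ideal.span {x} = Ideal.span {y} * B ^ 2) : B.IsPrincipal := by
  have hy : Ideal.span {y} ≠ ⊥ := by
    intro h1
    rw [h1, Ideal.bot_mul, Ideal.span_singleton_eq_bot] at h
    exact hx h
  have h1 := congrArg idealClass h
  rw [idealClass_mul hy (pow_ne_zero 2 hB), idealClass_span, idealClass_span, one_mul,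
    idealClass_pow hB] at h1
  rw [← idealClass_eq_one hB, ← eq_pow_of_sq_eq_one hodd h1.symm, pow_card_eq_one']

namespace IsTriquad
variable {p q : ℕ} {L K F : Type*} [Field L] [NumberField L] [Field K] [NumberField K]
    [Field F] [NumberField F] [Algebra L F] [Algebra K F] {s t r : 𝓞 F} {σ : F ≃ₐ[L] F}
    {ρ : F ≃ₐ[K] F} {ς τ : F ≃ₐ[ℚ] F}

section nonsquare
variable (h : IsTriquad p q s t r σ ρ ς τ)
include h

lemma not_isSquare_idealClass_of_absNorm {I : Ideal (𝓞 F)} {m : ℕ} (hm : m ≠ 0)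
    (hI : Ideal.absNorm I = 2 * m ^ 2) : ¬ IsSquare (idealClass I) := by
  have := h.fact_p
  intro hsq
  have hI0 : I ≠ ⊥ := by
    rintro rfl
    rw [Ideal.absNorm_bot] at hI
    have := pow_pos (Nat.pos_of_ne_zero hm) 2
    omega
  obtain ⟨x, y, A, hx, hy, hA, hxy⟩ := exists_span_mul_eq_of_isSquare hI0 hsq
  have hr : (r : F) ∉ Set.range (algebraMap ℚ F) := by
    rintro ⟨c, hc⟩
    exact h.r_notMem ⟨c, by rw [map_ratCast, ← hc, eq_ratCast]⟩
  obtain ⟨X, Y, hXY⟩ := exists_norm_eq_sq_sub (k := ℚ) (d := -p)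
    (by rw [h.coe_r_sq]; simp) hr ((y : F) / x)
  have hx' : Algebra.norm ℚ (x : F) ≠ 0 :=
    Algebra.norm_ne_zero_iff.2 (RingOfIntegers.coe_ne_zero_iff.2 hx)
  have hN : Algebra.norm ℚ ((y : F) / x) * Algebra.norm ℚ (x : F) = Algebra.norm ℚ (y : F) := by
    rw [← map_mul, div_mul_cancel₀ _ (RingOfIntegers.coe_ne_zero_iff.2 hx)]
  have hA' : (Ideal.absNorm A : ℚ) ≠ 0 := by
    rwa [Nat.cast_ne_zero, Ne, Ideal.absNorm_eq_zero_iff]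
  have h1 := congrArg Ideal.absNorm hxy
  rw [map_mul, map_mul, map_pow, Ideal.absNorm_span_singleton, Ideal.absNorm_span_singleton,
    hI] at h1
  have h2 : |Algebra.norm ℚ (x : F)| * (2 * (m : ℚ) ^ 2) =
      |Algebra.norm ℚ (y : F)| * (Ideal.absNorm A : ℚ) ^ 2 := by
    rw [← Algebra.coe_norm_int, ← Algebra.coe_norm_int, ← Int.cast_abs, ← Int.cast_abs,
      Int.abs_eq_natAbs, Int.abs_eq_natAbs]
    exact_mod_cast h1
  have hpos : 0 ≤ X ^ 2 - -(p : ℚ) * Y ^ 2 := by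
    rw [neg_mul, sub_neg_eq_add]
    positivity
  rw [← hN, abs_mul, hXY, abs_of_nonneg hpos] at h2
  have h3 : 2 * (m : ℚ) ^ 2 = (X ^ 2 - -(p : ℚ) * Y ^ 2) * (Ideal.absNorm A : ℚ) ^ 2 :=
    mul_left_cancel₀ (abs_ne_zero.2 hx') (by linear_combination h2)
  have h4 := Rat.eq_zero_of_sq_add_mul_sq_eq_two_mul_sq (legendreSym_two_eq h.p_mod).1
    (x := X * Ideal.absNorm A) (y := Y * Ideal.absNorm A) (z := m) (by linear_combination -h3)
  exact hm (by exact_mod_cast h4)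

lemma relNorm_eq {P : Ideal (𝓞 F)} (hPr : P * P.map (conjInt ρ) = Ideal.span {r}) :
    Ideal.relNorm (𝓞 K) P = Ideal.span {(p : 𝓞 K)} := by
  have h1 := congrArg (Ideal.relNorm (𝓞 K)) hPr
  have h2 : Ideal.relNorm (𝓞 K) (P.map (conjInt ρ)) = Ideal.relNorm (𝓞 K) P :=
    Ideal.relNorm_map_algEquiv (conjInt ρ) P
  have h3 : Algebra.intNorm (𝓞 K) (𝓞 F) r ^ 2 = ((p : 𝓞 K) ^ 2) ^ 2 := by
    refine RingOfIntegers.ext ?_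
    rw [RingOfIntegers.coe_eq_algebraMap, RingOfIntegers.coe_eq_algebraMap, map_pow,
      Algebra.algebraMap_intNorm (A := 𝓞 K) (B := 𝓞 F) (K := K) (L := F), ← map_pow, h.coe_r_sq]
    have h4 : (-(p : F)) = algebraMap K F (-p) := by simp
    rw [h4, Algebra.norm_algebraMap, h.finrank_K]
    simp only [map_pow, map_natCast]
    ring
  rw [map_mul, h2, ← sq, Ideal.relNorm_singleton] at h1
  have h4 : Ideal.relNorm (𝓞 K) P ^ 2 = Ideal.span {(p : 𝓞 K)} ^ 2 := by
    rw [h1, Ideal.span_singleton_pow]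
    rcases sq_eq_sq_iff_eq_or_eq_neg.1 h3 with h5 | h5
    · rw [h5]
    · rw [h5, Ideal.span_singleton_neg]
  exact pow_left_injective two_ne_zero h4

lemma not_isSquare_idealClass_of_mul_map_eq {P : Ideal (𝓞 F)}
    (hPr : P * P.map (conjInt ρ) = Ideal.span {r}) : ¬ IsSquare (idealClass P) := by
  intro hsq
  have hP0 : P ≠ ⊥ := by
    rintro rfl
    rw [Ideal.bot_mul, eq_comm, Ideal.span_singleton_eq_bot] at hPr
    exact h.r_ne_zero hPr
  obtain ⟨φ⟩ := h.hom_K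
  obtain ⟨x, y, A, hx, hy, hA, hxy⟩ := exists_span_mul_eq_of_isSquare hP0 hsq
  have h1 := congrArg (Ideal.relNorm (𝓞 K)) hxy
  rw [map_mul, map_mul, map_pow, h.relNorm_eq hPr, Ideal.relNorm_singleton,
    Ideal.relNorm_singleton, Ideal.span_singleton_mul_span_singleton] at h1
  have hx0 : Algebra.intNorm (𝓞 K) (𝓞 F) x ≠ 0 := Algebra.intNorm_ne_zero.2 hx
  have hp0 : (p : 𝓞 K) ≠ 0 := Nat.cast_ne_zero.2 h.p_prime.ne_zero
  obtain ⟨β, hβ⟩ := isPrincipal_of_sq_of_odd h.odd_K (mul_ne_zero hx0 hp0)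
    (mt Ideal.relNorm_eq_bot_iff.1 hA) h1
  rw [hβ, Ideal.submodule_span_eq, Ideal.span_singleton_pow,
    Ideal.span_singleton_mul_span_singleton, Ideal.span_singleton_eq_span_singleton] at h1
  obtain ⟨u, hu⟩ := h1.symm
  have hu' := congrArg (algebraMap (𝓞 K) K) hu
  simp only [map_mul, map_pow, map_natCast] at hu'
  rw [Algebra.algebraMap_intNorm (A := 𝓞 K) (B := 𝓞 F) (K := K) (L := F),
    Algebra.algebraMap_intNorm (A := 𝓞 K) (B := 𝓞 F) (K := K) (L := F)] at hu'
  have hxF : (x : F) ≠ 0 := RingOfIntegers.coe_ne_zero_iff.2 hx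
  have hN : Algebra.norm K ((y : F) / x) * Algebra.norm K (x : F) = Algebra.norm K (y : F) := by
    rw [← map_mul, div_mul_cancel₀ _ hxF]
  have hx' : Algebra.norm K (x : F) ≠ 0 := Algebra.norm_ne_zero_iff.2 hxF
  rw [← hN] at hu'
  have h3 : Algebra.norm K ((y : F) / x) * ((β : K) ^ 2 * ((u : 𝓞 K) : K)) = p :=
    mul_left_cancel₀ hx' (by linear_combination hu')
  obtain ⟨v, hv⟩ := exists_eq_sq_or_neg_sq h.rank_K h.neg_one_K u
  rcases hv with rfl | rfl
  · obtain ⟨X, Y, hXY⟩ := exists_norm_eq_sq_sub (k := K) (d := -2)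
      (by rw [h.coe_s_sq, map_neg, map_ofNat]) h.s_notMem ((y : F) / x)
    rw [hXY, Units.val_pow_eq_pow_val] at h3
    have h4 := congrArg φ h3
    simp only [map_mul, map_sub, map_neg, map_pow, map_ofNat, map_natCast] at h4
    have h5 := Padic.eq_zero_of_sq_add_two_mul_sq h.p_mod (x := φ (X * β * v))
      (y := φ (Y * β * v)) (z := 1) (by simp only [map_mul]; linear_combination h4)
    exact one_ne_zero h5
  · obtain ⟨X, Y, hXY⟩ := exists_norm_eq_sq_sub (k := K) (d := -p)
      (by rw [h.coe_r_sq, map_neg, map_natCast]) h.r_notMem ((y : F) / x)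
    rw [hXY, Units.val_neg, Units.val_pow_eq_pow_val] at h3
    have h4 := congrArg φ h3
    simp only [map_mul, map_sub, map_neg, map_pow, map_natCast] at h4
    have h5 := Padic.eq_zero_of_sq_add_mul_sq h.p_mod (x := φ (X * β * v))
      (y := φ (Y * β * v)) (z := 1) (by simp only [map_mul]; linear_combination -h4)
    exact one_ne_zero h5

end nonsquare
end IsTriquad

section group
variable {G : Type*} [CommGroup G]

lemma not_isSquare_pow_of_odd {a : G} (ha : ¬ IsSquare a) {n : ℕ} (hn : Odd n) :
    ¬ IsSquare (a ^ n) := by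
  rintro ⟨c, hc⟩
  obtain ⟨k, rfl⟩ := hn
  refine ha ⟨c * (a ^ k)⁻¹, ?_⟩
  rw [mul_mul_mul_comm, ← hc, pow_succ, two_mul, pow_add, ← mul_inv, mul_inv_cancel_comm]

lemma sylow_two_mulEquiv [Finite G] (P : Sylow 2 G) {a b : G} (ha : a ^ 2 = 1) (hb : b ^ 2 = 1)
    (h : ∀ c : G, c ^ 2 = 1 → c = 1 ∨ c = a ∨ c = b ∨ c = a * b) (hna : ¬ IsSquare a)
    (hnb : ¬ IsSquare b) (hnab : ¬ IsSquare (a * b)) :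
    Nonempty (P ≃* Multiplicative (ZMod 2 × ZMod 2)) := by
  have hsq : ∀ c : G, (c ^ 2) ^ 2 = 1 → c ^ 2 = 1 := by
    intro c hc
    rcases h _ hc with h1 | h1 | h1 | h1
    · exact h1
    · exact absurd ⟨c, by rw [← h1, sq]⟩ hna
    · exact absurd ⟨c, by rw [← h1, sq]⟩ hnb
    · exact absurd ⟨c, by rw [← h1, sq]⟩ hnab
  have hpow : ∀ (k : ℕ) (c : G), c ^ 2 ^ k = 1 → c ^ 2 = 1 := by
    intro k
    induction k with
    | zero => intro c hc; rw [pow_zero, pow_one] at hc; rw [hc, one_pow]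
    | succ k ih =>
      intro c hc
      rw [pow_succ', pow_mul] at hc
      exact hsq c (ih _ hc)
  have hP : ∀ c : G, c ∈ P ↔ c ^ 2 = 1 := by
    intro c
    constructor
    · intro hc
      obtain ⟨k, hk⟩ := P.isPGroup' ⟨c, hc⟩
      exact hpow k c (congrArg Subtype.val hk)
    · intro hc
      have h1 : IsPGroup 2 (Subgroup.zpowers c) := by
        rintro ⟨x, hx⟩
        obtain ⟨n, rfl⟩ := Subgroup.mem_zpowers_iff.1 hx
        refine ⟨1, Subtype.ext ?_⟩
        change (c ^ n) ^ 2 ^ 1 = 1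
        rw [pow_one, ← zpow_natCast, ← zpow_mul, mul_comm, zpow_mul, zpow_natCast, hc, one_zpow]
      obtain ⟨Q, hQ⟩ := h1.exists_le_sylow
      have := Sylow.unique_of_normal P inferInstance
      rw [Subsingleton.elim P Q]
      exact hQ (Subgroup.mem_zpowers c)
  have ha1 : a ≠ 1 := fun h1 => hna (h1 ▸ IsSquare.one)
  have hb1 : b ≠ 1 := fun h1 => hnb (h1 ▸ IsSquare.one)
  have hab : a ≠ b := by
    rintro rfl
    exact hnab ⟨a, rfl⟩
  have hset : ((P : Subgroup G) : Set G) = {1, a, b, a * b} := by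
    ext c
    simp only [Set.mem_insert_iff, Set.mem_singleton_iff]
    refine (hP c).trans ⟨h c, ?_⟩
    rintro (rfl | rfl | rfl | rfl)
    · exact one_pow 2
    · exact ha
    · exact hb
    · rw [mul_pow, ha, hb, one_mul]
  have hcard : Nat.card (P : Subgroup G) = 4 := by
    have h1 : Nat.card (P : Subgroup G) = ((P : Subgroup G) : Set G).ncard := rfl
    classical
    rw [h1, hset]
    have h2 : ({1, a, b, a * b} : Set G) = (({1, a, b, a * b} : Finset G) : Set G) := by simp
    rw [h2, Set.ncard_coe_finset]
    rw [Finset.card_insert_of_notMem, Finset.card_insert_of_notMem, Finset.card_insert_of_notMem,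
      Finset.card_singleton]
    · simpa using ha1
    · simp [hab, hb1]
    · simp only [Finset.mem_insert, Finset.mem_singleton, not_or]
      exact ⟨ha1.symm, hb1.symm, fun h1 => hnab (h1 ▸ IsSquare.one)⟩
  have hexp : ∀ c : P, c ^ 2 = 1 := fun c => Subtype.ext ((hP c).1 c.2)
  have : IsKleinFour P := by
    refine ⟨hcard, ?_⟩
    have h1 : Monoid.exponent P ∣ 2 := Monoid.exponent_dvd_of_forall_pow_eq_one hexp
    refine ((Nat.dvd_prime Nat.prime_two).1 h1).resolve_left fun h2 => ?_
    rw [Monoid.exp_eq_one_iff] at h2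
    have := Nat.card_eq_one_iff_unique.2 ⟨h2, ⟨1⟩⟩
    rw [hcard] at this
    omega
  have : IsKleinFour (Multiplicative (ZMod 2 × ZMod 2)) := inferInstance
  exact IsKleinFour.nonempty_mulEquiv

end group

namespace IsTriquad
variable {p q : ℕ} {L K F : Type*} [Field L] [NumberField L] [Field K] [NumberField K]
    [Field F] [NumberField F] [Algebra L F] [Algebra K F] {s t r : 𝓞 F} {σ : F ≃ₐ[L] F}
    {ρ : F ≃ₐ[K] F} {ς τ : F ≃ₐ[ℚ] F}

theorem nonempty_mulEquiv (h : IsTriquad p q s t r σ ρ ς τ) (S : Sylow 2 (ClassGroup (𝓞 F))) :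
    Nonempty (S ≃* Multiplicative (ZMod 2 × ZMod 2)) := by
  obtain ⟨P, hP, hPr, hPN, hPQ, hPσ⟩ := h.exists_prime_p
  obtain ⟨T, hT, hTs, hTN, hTQ, hTσ⟩ := h.exists_prime_two
  have hp := h.p_prime.ne_zero
  have hP0 : P ≠ ⊥ := by
    rw [Ne, ← Ideal.absNorm_eq_zero_iff, hPN]
    exact pow_ne_zero 2 hp
  have hT0 : T ≠ ⊥ := by
    rw [Ne, ← Ideal.absNorm_eq_zero_iff, hTN]
    exact two_ne_zero
  refine sylow_two_mulEquiv S (h.idealClass_pow_card_sq hP0 hPσ) (h.idealClass_pow_card_sq hT0 hTσ)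
    (fun c hc => h.eq_of_sq_eq_one hP0 hT0 hPr hPQ hPσ hTs hTQ hTσ rfl hc)
    (not_isSquare_pow_of_odd (h.not_isSquare_idealClass_of_mul_map_eq hPr) h.odd_L)
    (not_isSquare_pow_of_odd (h.not_isSquare_idealClass_of_absNorm one_ne_zero
      (by rw [hTN, one_pow, mul_one])) h.odd_L) ?_
  rw [← mul_pow, ← idealClass_mul hP0 hT0]
  exact not_isSquare_pow_of_odd (h.not_isSquare_idealClass_of_absNorm hp
    (by rw [map_mul, hPN, hTN, mul_comm])) h.odd_L

end IsTriquad

section tower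
variable {L F : Type*} [Field L] [Field F] [Algebra L F]

lemma IsQuad.mk_adjoin {r : F} {d : L} (hsq : r ^ 2 = algebraMap L F d) (hd : ¬ IsSquare d) :
    IsQuad L L⟮r⟯ (AdjoinSimple.gen L r) d := by
  refine IsQuad.adjoin hsq ?_
  rintro ⟨x, hx⟩
  exact hd ⟨x, (algebraMap L F).injective (by rw [map_mul, hx, ← hsq, pow_two])⟩

lemma IsQuad.mk_of_adjoin_eq_top {r : F} {d : L} (hsq : r ^ 2 = algebraMap L F d)
    (hd : ¬ IsSquare d) (htop : L⟮r⟯ = ⊤) : IsQuad L F r d where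
  sq := hsq
  notMem := by
    rintro ⟨x, hx⟩
    exact hd ⟨x, (algebraMap L F).injective (by rw [map_mul, hx, ← hsq, pow_two])⟩
  span z := IsQuad.of_adjoin hsq (htop ▸ mem_top)

lemma IsQuad.isSquare_of_tower {k M : Type*} [Field k] [Field M] [Algebra k L] [Algebra k M]
    [Algebra L M] [IsScalarTower k L M] [NeZero (2 : L)] [NeZero (2 : M)] {x : L} {y : M}
    {a b : k} (h₁ : IsQuad k L x a) (h₂ : IsQuad L M y (algebraMap k L b)) {e : k}
    (he : IsSquare (algebraMap k M e)) :
    IsSquare e ∨ IsSquare (a * e) ∨ IsSquare (b * e) ∨ IsSquare (a * (b * e)) := by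
  rw [IsScalarTower.algebraMap_apply k L M] at he
  rcases h₂.isSquare_of he with h | h
  · rcases h₁.isSquare_of h with h | h <;> tauto
  · rw [← map_mul] at h
    rcases h₁.isSquare_of h with h | h <;> tauto

variable [NumberField F] {x y z : F} {a b c : ℚ}

/-- A triquadratic field `ℚ(x, y, z)` is a tower of three quadratic extensions. -/
lemma exists_tower (hx : x ^ 2 = algebraMap ℚ F a) (hy : y ^ 2 = algebraMap ℚ F b)
    (hz : z ^ 2 = algebraMap ℚ F c) (hgen : ∀ S : Subfield F, x ∈ S → y ∈ S → z ∈ S → S = ⊤)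
    (ha : ¬ IsSquare a) (hb : ¬ IsSquare b) (hab : ¬ IsSquare (a * b)) (hc : ¬ IsSquare c)
    (hac : ¬ IsSquare (a * c)) (hbc : ¬ IsSquare (b * c)) (habc : ¬ IsSquare (a * (b * c))) :
    IsQuad ℚ ℚ⟮x⟯ (AdjoinSimple.gen ℚ x) a ∧
      IsQuad ℚ⟮x⟯ ℚ⟮x⟯⟮y⟯ (AdjoinSimple.gen ℚ⟮x⟯ y) (algebraMap ℚ ℚ⟮x⟯ b) ∧
      ∃ σ : F ≃ₐ[ℚ⟮x⟯⟮y⟯] F, IsQuadConj z (algebraMap ℚ ℚ⟮x⟯⟮y⟯ c) σ ∧ σ x = x ∧ σ y = y := by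
  have h₁ : IsQuad ℚ ℚ⟮x⟯ (AdjoinSimple.gen ℚ x) a := .mk_adjoin hx ha
  have h₂ : IsQuad ℚ⟮x⟯ ℚ⟮x⟯⟮y⟯ (AdjoinSimple.gen ℚ⟮x⟯ y) (algebraMap ℚ ℚ⟮x⟯ b) := by
    refine .mk_adjoin (by rw [hy, ← IsScalarTower.algebraMap_apply]) fun h => ?_
    rcases h₁.isSquare_of h with h | h
    exacts [hb h, hab h]
  let xM : ℚ⟮x⟯⟮y⟯ := algebraMap ℚ⟮x⟯ ℚ⟮x⟯⟮y⟯ (AdjoinSimple.gen ℚ x)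
  let yM : ℚ⟮x⟯⟮y⟯ := AdjoinSimple.gen ℚ⟮x⟯ y
  have h₃ : IsQuad ℚ⟮x⟯⟮y⟯ F z (algebraMap ℚ ℚ⟮x⟯⟮y⟯ c) := by
    refine .mk_of_adjoin_eq_top (by rw [hz, ← IsScalarTower.algebraMap_apply]) (fun h => ?_) ?_
    · have := h₁.isSquare_of_tower h₂ h
      tauto
    · refine toSubfield_injective (hgen _ ?_ ?_ ?_)
      · exact IntermediateField.algebraMap_mem ℚ⟮x⟯⟮y⟯⟮z⟯ xM
      · exact IntermediateField.algebraMap_mem ℚ⟮x⟯⟮y⟯⟮z⟯ yM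
      · exact mem_adjoin_simple_self _ z
  obtain ⟨σ, hσ⟩ := h₃.exists_isQuadConj
  exact ⟨h₁, h₂, σ, hσ, σ.commutes xM, σ.commutes yM⟩

end tower

lemma ringHom_ext_of_generators {F : Type*} [Field F] {x y z : F}
    (hgen : ∀ S : Subfield F, x ∈ S → y ∈ S → z ∈ S → S = ⊤)
    {f g : F →+* F} (hx : f x = g x) (hy : f y = g y) (hz : f z = g z) : f = g := by
  have := hgen (f.eqLocusField g) hx hy hz
  ext w
  exact (this ▸ Subfield.mem_top w : w ∈ f.eqLocusField g)

section rational

lemma Rat.not_isSquare_neg {n : ℕ} (hn : n ≠ 0) : ¬ IsSquare (-n : ℚ) := by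
  rintro ⟨x, hx⟩
  have : (0 : ℚ) < n := by positivity
  nlinarith [mul_self_nonneg x]

lemma Rat.not_isSquare_prime {n : ℕ} (hn : n.Prime) : ¬ IsSquare (n : ℚ) := by
  rw [Rat.isSquare_natCast_iff]
  exact hn.prime.not_isSquare

lemma Rat.not_isSquare_mul_primes {m n : ℕ} (hm : m.Prime) (hn : n.Prime) (h : m ≠ n) :
    ¬ IsSquare (m * n : ℚ) := by
  rw [← Nat.cast_mul, Rat.isSquare_natCast_iff]
  exact _root_.not_isSquare_mul_primes hm hn h

lemma Rat.not_isSquare_two_mul {n : ℕ} (hn : n % 2 = 1) : ¬ IsSquare (2 * n : ℚ) := by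
  rw [← Nat.cast_ofNat, ← Nat.cast_mul, Rat.isSquare_natCast_iff]
  rintro ⟨x, hx⟩
  rcases Nat.even_or_odd' x with ⟨k, rfl | rfl⟩ <;> ring_nf at hx <;> omega

end rational

/-- The 2-class group of `ℚ(√-2, √-q, √-p)`. -/
theorem nonempty_sylow_mulEquiv {F : Type*} [Field F] [NumberField F] {p q : ℕ} (hp : p.Prime)
    (hq : q.Prime) (hp8 : p % 8 = 5) (hq8 : q % 8 = 7) (hpq : jacobiSym p q = -1) {s t r : F}
    (hs : s ^ 2 = -2) (ht : t ^ 2 = -q) (hr : r ^ 2 = -p)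
    (hgen : ∀ S : Subfield F, s ∈ S → t ∈ S → r ∈ S → S = ⊤)
    (S : Sylow 2 (ClassGroup (𝓞 F))) : Nonempty (S ≃* Multiplicative (ZMod 2 × ZMod 2)) := by
  have hne : p ≠ q := by rintro rfl; omega
  have hsQ : s ^ 2 = algebraMap ℚ F (-2) := by simp [hs]
  have htQ : t ^ 2 = algebraMap ℚ F (-q) := by simp [ht]
  have hrQ : r ^ 2 = algebraMap ℚ F (-p) := by simp [hr]
  have n2 : ¬ IsSquare (-2 : ℚ) := Rat.not_isSquare_neg two_ne_zero
  have nq : ¬ IsSquare (-q : ℚ) := Rat.not_isSquare_neg hq.ne_zero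
  have np : ¬ IsSquare (-p : ℚ) := Rat.not_isSquare_neg hp.ne_zero
  have n2q : ¬ IsSquare (-2 * -q : ℚ) := by
    rw [neg_mul_neg]; exact Rat.not_isSquare_two_mul (by omega)
  have n2p : ¬ IsSquare (-2 * -p : ℚ) := by
    rw [neg_mul_neg]; exact Rat.not_isSquare_two_mul (by omega)
  have nqp : ¬ IsSquare (-q * -p : ℚ) := by
    rw [neg_mul_neg]; exact Rat.not_isSquare_mul_primes hq hp hne.symm
  have n2qp : ¬ IsSquare (-2 * (-q * -p) : ℚ) := by
    rw [neg_mul_neg, ← Nat.cast_mul, neg_mul, ← Nat.cast_ofNat, ← Nat.cast_mul]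
    exact Rat.not_isSquare_neg (by simp [hp.ne_zero, hq.ne_zero])
  obtain ⟨hQs, hst, σ, hσ, hσs, hσt⟩ := exists_tower hsQ htQ hrQ hgen n2 nq n2q np n2p nqp n2qp
  obtain ⟨hQt, -, ρ, hρ, hρt, hρr⟩ := exists_tower htQ hrQ hsQ (fun S h₁ h₂ h₃ => hgen S h₃ h₁ h₂)
    nq np nqp n2 (by rwa [mul_comm]) (by rwa [mul_comm])
    (by rwa [← mul_assoc, mul_comm])
  obtain ⟨-, -, ς, hς, hςs, hςr⟩ := exists_tower hsQ hrQ htQ (fun S h₁ h₂ h₃ => hgen S h₁ h₃ h₂)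
    n2 np n2p nq n2q (by rwa [mul_comm]) (by rwa [mul_comm (-p : ℚ)])
  have hσr := hσ.map_gen
  have hρs := hρ.map_gen
  have hςt := hς.map_gen
  rw [map_neg, map_natCast] at hσ
  have hstQ := hst
  rw [map_neg, map_natCast] at hst
  obtain ⟨s', rfl, hs'⟩ := exists_coe_eq_of_sq (x := s) (c := -2) (by simpa using hs)
  obtain ⟨t', rfl, ht'⟩ := exists_coe_eq_of_sq (x := t) (c := -q) (by simpa using ht)
  obtain ⟨r', rfl, hr'⟩ := exists_coe_eq_of_sq (x := r) (c := -p) (by simpa using hr)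
  have hL : Module.finrank ℚ ℚ⟮(s' : F)⟯⟮(t' : F)⟯ = 4 := by
    rw [← Module.finrank_mul_finrank ℚ ℚ⟮(s' : F)⟯ ℚ⟮(s' : F)⟯⟮(t' : F)⟯, hQs.finrank_eq,
      hst.finrank_eq]
  have hF : Module.finrank ℚ F = 8 := by
    rw [← Module.finrank_mul_finrank ℚ ℚ⟮(s' : F)⟯⟮(t' : F)⟯ F, hL, hσ.finrank_eq]
  have hF' := Module.finrank_mul_finrank ℚ ℚ⟮(t' : F)⟯ F
  rw [hQt.finrank_eq, hF] at hF'
  obtain ⟨c, hc⟩ := PadicInt.exists_sq_eq_of_mod_eight (n := -q) (by omega)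
  have hKc : IsTotallyComplex ℚ⟮(t' : F)⟯ := isTotallyComplex_of_sq
    (neg_lt_zero.2 (Nat.cast_pos.2 hq.pos)) hQt.sq
  have hLc : IsTotallyComplex ℚ⟮(s' : F)⟯⟮(t' : F)⟯ := isTotallyComplex_of_sq
    (neg_lt_zero.2 (Nat.cast_pos.2 hq.pos)) (by rw [hst.sq]; simp)
  let ρ' : F ≃ₐ[ℚ⟮(t' : F)⟯] F := ρ.restrictScalars ℚ⟮(t' : F)⟯
  let ς' : F ≃ₐ[ℚ] F := ς.restrictScalars ℚ
  let τ : F ≃ₐ[ℚ] F := (ρ.restrictScalars ℚ).trans (ς.restrictScalars ℚ)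
  have hτ (z : F) : τ z = ς (ρ z) := rfl
  have hτs : τ s' = -s' := by rw [hτ, hρs, map_neg, hςs]
  have hτt : τ t' = -t' := by rw [hτ, hρt, hςt]
  have hτr : τ r' = r' := by rw [hτ, hρr, hςr]
  have hττ : (τ : F →+* F).comp (τ : F →+* F) = RingHom.id F :=
    ringHom_ext_of_generators hgen (by simp [hτs]) (by simp [hτt]) (by simp [hτr])
  have hστ : (σ : F →+* F).comp (τ : F →+* F) = (τ : F →+* F).comp (σ : F →+* F) :=
    ringHom_ext_of_generators hgen (by simp [hτs, hσs]) (by simp [hτt, hσt])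
      (by simp [hτr, hσr])
  obtain ⟨σ₁, hσ₁⟩ := hQs.exists_isQuadConj
  obtain ⟨σ₂, hσ₂⟩ := hst.exists_isQuadConj
  obtain ⟨σ₃, hσ₃⟩ := hQt.exists_isQuadConj
  have h : IsTriquad p q s' t' r' σ ρ' ς' τ := {
    p_prime := hp
    q_prime := hq
    p_mod := hp8
    q_mod := hq8
    symbol := hpq
    s_sq := by simpa using hs'
    t_sq := by simpa using ht'
    r_sq := by simpa using hr'
    s_mem := by
      obtain ⟨a, ha, -⟩ := exists_coe_eq_of_sq (M := ℚ⟮(s' : F)⟯⟮(t' : F)⟯)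
        (x := algebraMap ℚ⟮(s' : F)⟯ _ (AdjoinSimple.gen ℚ (s' : F))) (c := -2)
        (by
          rw [← map_pow, hQs.sq]
          simp only [map_neg, map_ofNat, Int.cast_neg, Int.cast_ofNat])
      exact ⟨a, RingOfIntegers.ext (congrArg (algebraMap ℚ⟮(s' : F)⟯⟮(t' : F)⟯ F) ha)⟩
    t_mem := by
      obtain ⟨a, ha, -⟩ := exists_coe_eq_of_sq (M := ℚ⟮(s' : F)⟯⟮(t' : F)⟯)
        (x := AdjoinSimple.gen ℚ⟮(s' : F)⟯ (t' : F)) (c := -q) (by rw [hst.sq]; simp)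
      exact ⟨a, RingOfIntegers.ext (congrArg (algebraMap ℚ⟮(s' : F)⟯⟮(t' : F)⟯ F) ha)⟩
    conj := hσ
    ρ_s := RingOfIntegers.ext (hρs.trans (map_neg (algebraMap (𝓞 F) F) s').symm)
    ρ_t := RingOfIntegers.ext hρt
    ρ_r := RingOfIntegers.ext hρr
    ς_s := RingOfIntegers.ext hςs
    ς_t := RingOfIntegers.ext (hςt.trans (map_neg (algebraMap (𝓞 F) F) t').symm)
    ς_r := RingOfIntegers.ext hςr
    τ_s := RingOfIntegers.ext (hτs.trans (map_neg (algebraMap (𝓞 F) F) s').symm)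
    τ_t := RingOfIntegers.ext (hτt.trans (map_neg (algebraMap (𝓞 F) F) t').symm)
    τ_r := RingOfIntegers.ext hτr
    τ_τ := fun z => congrArg (fun f : F →+* F => f z) hττ
    σ_τ := fun z => congrArg (fun f : F →+* F => f z) hστ
    fixed := fun z hσz hτz => by
      obtain ⟨X, rfl⟩ := hσ.exists_of_fixed hσz
      obtain ⟨A, B, rfl⟩ := hst.span X
      obtain ⟨a, b, rfl⟩ := hQs.span A
      obtain ⟨c, d, rfl⟩ := hQs.span B
      have hst' : algebraMap ℚ⟮(s' : F)⟯⟮(t' : F)⟯ F (AdjoinSimple.gen ℚ⟮(s' : F)⟯ (t' : F)) = t' :=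
        rfl
      have hss' : algebraMap ℚ⟮(s' : F)⟯ F (AdjoinSimple.gen ℚ (s' : F)) = s' := rfl
      simp only [map_add, map_mul, ← IsScalarTower.algebraMap_apply, hst', hss', AlgEquiv.commutes,
        hτs, hτt] at hτz ⊢
      have h0 : algebraMap ℚ F b * s' + algebraMap ℚ F c * t' = 0 := by
        linear_combination -(1 / 2 : F) * hτz
      have h1 : algebraMap ℚ F a + algebraMap ℚ F b * s' +
          (algebraMap ℚ F c + algebraMap ℚ F d * s') * t' =
          algebraMap ℚ F a + algebraMap ℚ F d * (s' * t') := by linear_combination h0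
      rw [h1]
      exact add_mem (IntermediateField.algebraMap_mem _ a) (mul_mem (IntermediateField.algebraMap_mem _ d)
        (mem_adjoin_simple_self _ _))
    odd_L := IsQuadConj.odd_card_classGroup_biquadratic hq hq8 hσ₁ hσ₂
    rank_L := rank_eq_of_isTotallyComplex (n := 2) hL
    odd_K := IsQuadConj.odd_card_classGroup_of_prime hq (Or.inr (by omega)) hσ₃
    rank_K := rank_eq_of_isTotallyComplex (n := 1) hQt.finrank_eq
    hom_K := exists_ringHom_padic (by simpa using ht) (by simpa using nq) hc
    neg_one := fun h => by
      rcases hσ.isSquare_of (c := -1) (by simpa using h) with h | h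
      · rcases hQs.isSquare_of_tower hstQ (e := -1) (by simpa using h) with h | h | h | h
        · exact not_isSquare_neg_one_rat h
        · exact Rat.not_isSquare_prime Nat.prime_two (by simpa using h)
        · exact Rat.not_isSquare_prime hq (by simpa using h)
        · exact Rat.not_isSquare_neg (n := 2 * q) (by simp [hq.ne_zero]) (by simpa using h)
      · rcases hQs.isSquare_of_tower hstQ (e := p) (by simpa using h) with h | h | h | h
        · exact Rat.not_isSquare_prime hp h
        · exact Rat.not_isSquare_neg (n := 2 * p) (by simp [hp.ne_zero]) (by simpa using h)
        · exact Rat.not_isSquare_neg (n := q * p) (by simp [hp.ne_zero, hq.ne_zero])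
            (by simpa using h)
        · have : Odd (q * p) := Nat.odd_iff.2 (by simp [Nat.mul_mod, show q % 2 = 1 by omega,
            show p % 2 = 1 by omega])
          exact Rat.not_isSquare_two_mul (Nat.odd_iff.1 this) (by simpa using h)
    s_notMem := by
      rintro ⟨x, hx⟩
      have hx2 : x ^ 2 = -2 := (algebraMap ℚ⟮(t' : F)⟯ F).injective (by
        rw [map_pow, hx, hs, map_neg, map_ofNat])
      rcases hQt.isSquare_of (c := -2) ⟨x, by rw [← pow_two, hx2]; simp⟩ with h | h
      · exact n2 h
      · exact n2q (by rwa [mul_comm])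
    r_notMem := by
      rintro ⟨x, hx⟩
      have hx2 : x ^ 2 = -p := (algebraMap ℚ⟮(t' : F)⟯ F).injective (by
        rw [map_pow, hx, hr]; simp)
      rcases hQt.isSquare_of (c := -p) ⟨x, by rw [← pow_two, hx2]; simp⟩ with h | h
      · exact np h
      · exact nqp h
    finrank := hF
    finrank_K := by omega }
  exact h.nonempty_mulEquiv S

theorem statement7 (p q : ℕ) (h : Cond1 p q) [NumberField ↥(Ff p q)]
    (P : Sylow 2 (ClassGroup (𝓞 ↥(Ff p q)))) :
    Nonempty (↥(P : Subgroup (ClassGroup (𝓞 ↥(Ff p q)))) ≃*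
      Multiplicative (ZMod 2 × ZMod 2)) := by
  obtain ⟨hp, hq, hp4, hq4, h2p, h2q, hpq⟩ := h
  have hp8 : p % 8 = 5 := by
    rw [jacobiSym.at_two (Nat.odd_iff.2 (by omega)), ZMod.χ₈_nat_eq_if_mod_eight] at h2p
    grind
  have hq8 : q % 8 = 7 := by
    rw [jacobiSym.at_two (Nat.odd_iff.2 (by omega)), ZMod.χ₈_nat_eq_if_mod_eight] at h2q
    grind
  have hsq (n : ℕ) : ((Real.sqrt (2 * n) : ℝ) : ℂ) ^ 2 = 2 * n := by
    rw [← Complex.ofReal_pow, Real.sq_sqrt (by positivity)]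
    simp
  have hs : (Complex.I * ((Real.sqrt 2 : ℝ) : ℂ)) ^ 2 = -2 := by
    have := hsq 1
    rw [Nat.cast_one, mul_one, Nat.cast_one, mul_one] at this
    rw [mul_pow, Complex.I_sq, this]
    ring
  let a : Ff p q := ⟨_, subset_adjoin ℚ _ (Or.inl rfl)⟩
  let b : Ff p q := ⟨_, subset_adjoin ℚ _ (Or.inr (Or.inl rfl))⟩
  let s : Ff p q := ⟨_, subset_adjoin ℚ _ (Or.inr (Or.inr rfl))⟩
  have ha : a ^ 2 = 2 * p := Subtype.ext (hsq p)
  have hb : b ^ 2 = 2 * q := Subtype.ext (hsq q)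
  have hs : s ^ 2 = -2 := Subtype.ext hs
  refine nonempty_sylow_mulEquiv hp hq hp8 hq8 hpq (s := s) (t := b * s / 2) (r := a * s / 2) hs
    ?_ ?_ (fun S h₁ h₂ h₃ => ?_) P
  · rw [div_pow, mul_pow, hb, hs]
    ring
  · rw [div_pow, mul_pow, ha, hs]
    ring
  · have hmul (c : Ff p q) (hc : c * s / 2 ∈ S) : c ∈ S := by
      have : c = -(c * s / 2 * s) := by linear_combination (c / 2) * hs
      rw [this]
      exact neg_mem (mul_mem hc h₁)
    have key : (Ff p q).toSubfield ≤ S.map (Ff p q).val.toRingHom := by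
      refine (adjoin_toSubfield ℚ _).le.trans (Subfield.closure_le.2 ?_)
      rintro x (⟨y, rfl⟩ | hx)
      · exact ⟨(y : Ff p q), SubfieldClass.ratCast_mem S y, map_ratCast (Ff p q).val.toRingHom y⟩
      · rcases hx with rfl | rfl | rfl
        exacts [⟨a, hmul a h₃, rfl⟩, ⟨b, hmul b h₂, rfl⟩, ⟨s, h₁, rfl⟩]
    refine eq_top_iff.2 fun z _ => ?_
    obtain ⟨w, hw, hwz⟩ := key z.2
    rwa [← Subtype.ext hwz]
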